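/- arXiv:math/9909172 — 2 statements merged into one kernel-verified Lean document; each statement's English description precedes it below -/
import Mathlib

section
/- Let τ = (1 + √5)/2, let P_d = {x ∈ ℝ³ : |τx₁| + |x₂| ≤ 1, |τx₂| + |x₃| ≤ 1, |τx₃| + |x₁| ≤ 1} be the regular dodecahedron, let P_i = {x ∈ ℝ³ : |x₁| + |x₂| + |x₃| ≤ 1, |τx₁| + |x₃/τ| ≤ 1, |τx₂| + |x₁/τ| ≤ 1, |τx₃| + |x₂/τ| ≤ 1} be the regular icosahedron, and let P_id = P_i ∩ P_d be the icosidodecahedron. Then the lattice packing density of P_id equals δ*(P_id) = (14 + 17τ)/48, and the lattice 2D₃ is a densest packing lattice of the scaled copy (1 + τ)·P_id, where D₃ is the lattice with basis (1,1,0), (1,0,1), (0,1,1). -/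
/-!
# The densest lattice packing of the icosidodecahedron

Scale a packing lattice so that the body is `τ²·P`. If half of a nonzero lattice vector `v` were
interior to the body, it would be interior to two translates; hence every nonzero `v` is `Good`:
it is either long (`|v|² ≥ 9.138`, a constant just below the value `4τ⁴/3` that belongs to the
triangular facets), or it lies in a cap `2τ² ≤ a · v` over one of the twelve pentagonal facets,
whose normals `a` are the vertices of an icosahedron (`good_of_packing`). Everything else about the
lattice follows from this property. The claim becomes that the determinant is at least `16`
(`det_bound`).

A basis minimising Selling's functional gives an obtuse superbase `b₀ + b₁ + b₂ + b₃ = 0`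
(`exists_sellMin`, `SellMin.obtuse`), and the squared determinant is the spanning-tree polynomial
in the nonnegative Selling parameters `-bᵢ · bⱼ` (`SB.tree`). There are three cases.

* Some `bᵢ` is long. The crude bound `|v|² ≥ 7.577` for the other lattice vectors already forces
  the polynomial to be at least `256` (`SB.long0`).
* All `bᵢ` are short. Then each lies in a cap, and some two of the four axes, say those of `b₀` and
  `b₂`, form an acute angle, as four axes cannot be pairwise obtuse. If `b₀ + b₁` or `b₀ + b₃` is
  long, the sharp inequalities `edge_pos` and `edge_neg` for pairs of caps again reduce the claim
  to a polynomial inequality (`SB.long_add`).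
* All `bᵢ`, `b₀ + b₁` and `b₀ + b₃` are short. Then `cap_hex` determines the inner products of all
  six axes, so that they are those of the fcc configuration up to an isometry (`frame`). In the
  adapted orthonormal frame the lattice is nearly `2D₃`, and the determinant bound is an explicit
  inequality for a `3 × 3` determinant (`final_ineq`, `fcc_bound`).

Equality holds for `2D₃`, all of whose nonzero vectors lie in caps (`fcc_cap`, `fcc_packing`). For
the volume, one octant of the dodecahedron is a cube with three roofs, and the facets of the
icosahedron cut off one corner and three half corners from it (`volume_icosidodeca`).
-/

open MeasureTheory Pointwise

/-- The lattice `Bℤ³`. -/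
def latticeOf (B : Matrix (Fin 3) (Fin 3) ℝ) : Set (Fin 3 → ℝ) :=
  {x | ∃ z : Fin 3 → ℤ, x = B.mulVec fun i => (z i : ℝ)}

/-- `Λ` is a packing lattice for `K`. -/
def IsPackingLattice (K Λ : Set (Fin 3 → ℝ)) : Prop :=
  ∀ x ∈ Λ, ∀ y ∈ Λ, x ≠ y →
    Disjoint (interior ((x + ·) '' K)) (interior ((y + ·) '' K))

/-- The lattice packing density `δ*(K)`. -/
noncomputable def packDensity (K : Set (Fin 3 → ℝ)) : ℝ :=
  sSup {r | ∃ B : Matrix (Fin 3) (Fin 3) ℝ, IsUnit B.det ∧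
    IsPackingLattice K (latticeOf B) ∧ r = (volume K).toReal / |B.det|}

/-- The golden ratio. -/
noncomputable def τ : ℝ := (1 + Real.sqrt 5) / 2

/-- The regular dodecahedron. -/
noncomputable def dodeca : Set (Fin 3 → ℝ) :=
  {x | |τ * x 0| + |x 1| ≤ 1 ∧ |τ * x 1| + |x 2| ≤ 1 ∧ |τ * x 2| + |x 0| ≤ 1}

/-- The regular icosahedron. -/
noncomputable def icosa : Set (Fin 3 → ℝ) :=
  {x | |x 0| + |x 1| + |x 2| ≤ 1 ∧ |τ * x 0| + |x 2 / τ| ≤ 1 ∧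
       |τ * x 1| + |x 0 / τ| ≤ 1 ∧ |τ * x 2| + |x 1 / τ| ≤ 1}

/-- The icosidodecahedron. -/
noncomputable def icosidodeca : Set (Fin 3 → ℝ) := icosa ∩ dodeca

/-- The fcc lattice basis matrix `D₃` with columns `(1,1,0), (1,0,1), (0,1,1)`. -/
def D3 : Matrix (Fin 3) (Fin 3) ℝ :=
  (Matrix.of ![![1,1,0], ![1,0,1], ![0,1,1]]).transpose

/-! ### The golden ratio -/

theorem tau_sq : τ ^ 2 = τ + 1 := by
  have h : Real.sqrt 5 ^ 2 = 5 := Real.sq_sqrt (by norm_num)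
  unfold τ
  nlinarith

theorem tau_gt : (1.61803 : ℝ) < τ := by
  have h : (2.23606 : ℝ) < Real.sqrt 5 := Real.lt_sqrt_of_sq_lt (by norm_num)
  unfold τ
  linarith

theorem tau_lt : τ < (1.61804 : ℝ) := by
  have h : Real.sqrt 5 < (2.23608 : ℝ) := by
    rw [Real.sqrt_lt' (by norm_num)]
    norm_num
  unfold τ
  linarith

theorem tau_pos : 0 < τ := by linarith [tau_gt]

/-! ### Inner products and caps -/

/-- The Euclidean inner product of `ℝ³`. -/
def dt (a b : Fin 3 → ℝ) : ℝ := a 0 * b 0 + a 1 * b 1 + a 2 * b 2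

theorem dt_comm (a b : Fin 3 → ℝ) : dt a b = dt b a := by unfold dt; ring

theorem dt_self_nonneg (a : Fin 3 → ℝ) : 0 ≤ dt a a := by
  unfold dt; nlinarith [mul_self_nonneg (a 0), mul_self_nonneg (a 1), mul_self_nonneg (a 2)]

theorem dt_add_left (a b c : Fin 3 → ℝ) : dt (a + b) c = dt a c + dt b c := by
  simp only [dt, Pi.add_apply]; ring

theorem dt_add_right (a b c : Fin 3 → ℝ) : dt a (b + c) = dt a b + dt a c := by
  simp only [dt, Pi.add_apply]; ring

theorem dt_sub_left (a b c : Fin 3 → ℝ) : dt (a - b) c = dt a c - dt b c := by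
  simp only [dt, Pi.sub_apply]; ring

theorem dt_sub_right (a b c : Fin 3 → ℝ) : dt a (b - c) = dt a b - dt a c := by
  simp only [dt, Pi.sub_apply]; ring

theorem dt_smul_left (r : ℝ) (b c : Fin 3 → ℝ) : dt (r • b) c = r * dt b c := by
  simp only [dt, Pi.smul_apply, smul_eq_mul]; ring

theorem dt_smul_right (r : ℝ) (b c : Fin 3 → ℝ) : dt b (r • c) = r * dt b c := by
  simp only [dt, Pi.smul_apply, smul_eq_mul]; ring

theorem dt_neg_left (b c : Fin 3 → ℝ) : dt (-b) c = - dt b c := by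
  simp only [dt, Pi.neg_apply]; ring

theorem dt_neg_right (b c : Fin 3 → ℝ) : dt b (-c) = - dt b c := by
  simp only [dt, Pi.neg_apply]; ring

theorem dt_cauchy (a b : Fin 3 → ℝ) : dt a b ^ 2 ≤ dt a a * dt b b := by
  unfold dt
  nlinarith [sq_nonneg (a 0 * b 1 - a 1 * b 0), sq_nonneg (a 0 * b 2 - a 2 * b 0),
    sq_nonneg (a 1 * b 2 - a 2 * b 1)]

theorem eq_zero_of_dt_self {a : Fin 3 → ℝ} (h : dt a a = 0) : a = 0 := by
  unfold dt at h
  have h0 := mul_self_nonneg (a 0)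
  have h1 := mul_self_nonneg (a 1)
  have h2 := mul_self_nonneg (a 2)
  ext i
  fin_cases i
  · exact mul_self_eq_zero.1 (by linarith : a 0 * a 0 = 0)
  · exact mul_self_eq_zero.1 (by linarith : a 1 * a 1 = 0)
  · exact mul_self_eq_zero.1 (by linarith : a 2 * a 2 = 0)

/-- `a` is one of the twelve outer normals `(±τ, ±1, 0)`, `(0, ±τ, ±1)`, `(±1, 0, ±τ)` of the
pentagonal facets, i.e. one of the vertices of a regular icosahedron. -/
def IsAx (a : Fin 3 → ℝ) : Prop :=
  ∃ ε δ : ℝ, (ε = 1 ∨ ε = -1) ∧ (δ = 1 ∨ δ = -1) ∧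
    (a = ![ε * τ, δ, 0] ∨ a = ![0, ε * τ, δ] ∨ a = ![δ, 0, ε * τ])

theorem IsAx.self {a : Fin 3 → ℝ} (h : IsAx a) : dt a a = τ + 2 := by
  obtain ⟨ε, δ, he, hd, h⟩ := h
  have he2 : ε ^ 2 = 1 := by rcases he with rfl | rfl <;> norm_num
  have hd2 : δ ^ 2 = 1 := by rcases hd with rfl | rfl <;> norm_num
  have := tau_sq
  rcases h with rfl | rfl | rfl <;> simp [dt] <;> linear_combination τ ^ 2 * he2 + hd2 + this

theorem IsAx.neg {a : Fin 3 → ℝ} (h : IsAx a) : IsAx (-a) := by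
  obtain ⟨ε, δ, he, hd, h⟩ := h
  refine ⟨-ε, -δ, ?_, ?_, ?_⟩
  · rcases he with rfl | rfl <;> simp
  · rcases hd with rfl | rfl <;> simp
  · rcases h with rfl | rfl | rfl <;> simp

/-- The six axes of the icosahedron are equiangular. -/
theorem IsAx.pair {a b : Fin 3 → ℝ} (ha : IsAx a) (hb : IsAx b) :
    a = b ∨ a = -b ∨ dt a b = τ ∨ dt a b = -τ := by
  have ht := tau_sq
  obtain ⟨ε, δ, he, hd, h⟩ := ha
  obtain ⟨ε', δ', he', hd', h'⟩ := hb
  have h1 : τ * τ - 1 = τ := by linarith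
  rcases h with rfl | rfl | rfl <;> rcases h' with rfl | rfl | rfl <;>
  rcases he with rfl | rfl <;> rcases hd with rfl | rfl <;>
  rcases he' with rfl | rfl <;> rcases hd' with rfl | rfl <;>
  first
  | (left; simp; done)
  | (right; left; simp; done)
  | (right; right; left; simp [dt]; done)
  | (right; right; left; simp [dt]; linarith)
  | (right; right; right; simp [dt]; done)
  | (right; right; right; simp [dt]; linarith)

/-- The only property of a nonzero vector of a packing lattice (of the body with circumradius `τ`)
that the proof uses: it is either long, or lies beyond a pentagonal facet of the doubled body.
The bound `9.138` is slightly below `4τ⁴/3`, the squared distance of the triangular facets. -/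
def Good (v : Fin 3 → ℝ) : Prop :=
  9.138 ≤ dt v v ∨ ∃ a, IsAx a ∧ 2 * τ ^ 2 ≤ dt a v

theorem sq_dist_cap {a v : Fin 3 → ℝ} (ha : IsAx a) (h : 2 * τ ^ 2 ≤ dt a v) :
    7.577 ≤ dt v v := by
  have h1 := dt_cauchy a v
  rw [ha.self] at h1
  have h2 := tau_sq
  have h3 := tau_gt
  have h4 := tau_lt
  have h5 : (5.236 : ℝ) ≤ dt a v := by nlinarith
  have h6 : (5.236 : ℝ) ^ 2 ≤ dt a v ^ 2 := by gcongr
  have h7 := dt_self_nonneg v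
  nlinarith

theorem Good.sq {v : Fin 3 → ℝ} (h : Good v) : 7.577 ≤ dt v v := by
  rcases h with h | ⟨a, ha, h⟩
  · linarith
  · exact sq_dist_cap ha h

/-- Two short vectors in the same cap are too close to each other. -/
theorem same_cap {a u v : Fin 3 → ℝ} (ha : IsAx a) (hu : 2 * τ ^ 2 ≤ dt a u)
    (hv : 2 * τ ^ 2 ≤ dt a v) (nu : dt u u < 9.138) (nv : dt v v < 9.138) :
    dt (u - v) (u - v) < 7.577 := by
  have h1 := dt_cauchy a (u + v)
  rw [ha.self] at h1
  have h2 := tau_sq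
  have h3 := tau_gt
  have h4 := tau_lt
  have h5 : (10.472 : ℝ) ≤ dt a (u + v) := by rw [dt_add_right]; nlinarith
  have h6 : (10.472 : ℝ) ^ 2 ≤ dt a (u + v) ^ 2 := by gcongr
  have h7 := dt_self_nonneg (u + v)
  have h8 : 30 ≤ dt (u + v) (u + v) := by nlinarith
  have h9 : dt (u - v) (u - v) = 2 * dt u u + 2 * dt v v - dt (u + v) (u + v) := by
    simp only [dt, Pi.add_apply, Pi.sub_apply]; ring
  linarith

theorem cap_pair {a b u v : Fin 3 → ℝ} (ha : IsAx a) (hb : IsAx b) (hu : 2 * τ ^ 2 ≤ dt a u)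
    (hv : 2 * τ ^ 2 ≤ dt b v) (nu : dt u u < 9.138) (nv : dt v v < 9.138)
    (gs : Good (u - v)) (ga : Good (u + v)) : dt a b = τ ∨ dt a b = -τ := by
  rcases ha.pair hb with rfl | rfl | h
  · have := same_cap ha hu hv nu nv
    linarith [gs.sq]
  · have h1 := same_cap (v := -v) ha hu (by rw [dt_neg_left] at *; rw [dt_neg_right]; linarith) nu
      (by rw [dt_neg_right, dt_neg_left]; linarith)
    rw [sub_neg_eq_add] at h1
    linarith [ga.sq]
  · exact h

/-- A short vector of the cap of `a` has positive inner product with every neighbour of `a`. -/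
theorem cap_adjacent {a b u : Fin 3 → ℝ} (ha : IsAx a) (hb : IsAx b) (hab : dt a b = τ)
    (hu : 2 * τ ^ 2 ≤ dt a u) (nu : dt u u < 9.138) : 0 ≤ dt b u := by
  by_contra hneg
  push Not at hneg
  have h2 := tau_sq
  have h3 := tau_gt
  have h4 := tau_lt
  -- `(τ + 2) a - τ b` is the component of `a` orthogonal to `b`, up to scaling
  have h1 := dt_cauchy ((τ + 2) • a - τ • b) u
  have e1 : dt ((τ + 2) • a - τ • b) ((τ + 2) • a - τ • b) = (τ + 2) * ((τ + 2) ^ 2 - τ ^ 2) := by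
    rw [dt_sub_left, dt_sub_right, dt_sub_right]
    simp only [dt_smul_left, dt_smul_right]
    rw [ha.self, hb.self, dt_comm b a, hab]
    ring
  have e2 : dt ((τ + 2) • a - τ • b) u = (τ + 2) * dt a u - τ * dt b u := by
    rw [dt_sub_left, dt_smul_left, dt_smul_left]
  rw [e1, e2] at h1
  have h5 : (5.236 : ℝ) ≤ dt a u := by nlinarith
  have h6 : (18.94 : ℝ) ≤ (τ + 2) * dt a u - τ * dt b u := by nlinarith
  have h7 : (18.94 : ℝ) ^ 2 ≤ ((τ + 2) * dt a u - τ * dt b u) ^ 2 := by gcongr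
  have h8 : (τ + 2) * ((τ + 2) ^ 2 - τ ^ 2) < 37.9 := by nlinarith
  have h9 := dt_self_nonneg u
  nlinarith

/-- If `u`, `v` and `u + v` are all short, then the axes of the caps of `u` and `v` form an obtuse
angle. -/
theorem cap_hex {a b u v : Fin 3 → ℝ} (ha : IsAx a) (hb : IsAx b) (hu : 2 * τ ^ 2 ≤ dt a u)
    (hv : 2 * τ ^ 2 ≤ dt b v) (nu : dt u u < 9.138) (nv : dt v v < 9.138)
    (ns : dt (u + v) (u + v) < 9.138)
    (gs : Good (u - v)) (ga : Good (u + v)) : dt a b = -τ := by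
  rcases cap_pair ha hb hu hv nu nv gs ga with h | h
  · exfalso
    have h1 := cap_adjacent ha hb h hu nu
    have h2 := cap_adjacent hb ha (by rw [dt_comm, h]) hv nv
    have h3 := dt_cauchy (a + b) (u + v)
    have e1 : dt (a + b) (a + b) = 4 * τ + 4 := by
      rw [dt_add_left, dt_add_right, dt_add_right, ha.self, hb.self, dt_comm b a, h]; ring
    have e2 : 4 * τ ^ 2 ≤ dt (a + b) (u + v) := by
      rw [dt_add_left, dt_add_right, dt_add_right]; linarith
    have h4 := tau_sq
    have h5 := tau_gt
    have h6 := tau_lt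
    have h7 : (10.472 : ℝ) ≤ dt (a + b) (u + v) := by nlinarith
    have h8 : (10.472 : ℝ) ^ 2 ≤ dt (a + b) (u + v) ^ 2 := by gcongr
    rw [e1] at h3
    have h9 := dt_self_nonneg (u + v)
    nlinarith
  · exact h

/-- The sharp inequality for two caps whose axes form an acute angle. In the frame in which the
axes are `(τ, 1, 0)` and `(τ, -1, 0)`, equality holds at `(2, 2, 0)` and `(2, -2, 0)`. -/
theorem edge_pos {a b u v : Fin 3 → ℝ} (ha : IsAx a) (hb : IsAx b) (hab : dt a b = τ)
    (hu : 2 * τ ^ 2 ≤ dt a u) (hv : 2 * τ ^ 2 ≤ dt b v) :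
    16 ≤ dt u u + dt v v + 2 * (2 * τ - 3) * dt u v := by
  have ht := tau_sq
  have h3 := tau_gt
  have h4 := tau_lt
  set μ := 2 * τ - 3 with hμ
  have hba : dt b a = τ := by rw [dt_comm, hab]
  have haa := ha.self
  have hbb := hb.self
  -- `1 / τ = τ - 1`, so these are `(a + b) / τ ± (a - b)`
  set x : Fin 3 → ℝ := τ • a + (τ - 2) • b with hx
  set y : Fin 3 → ℝ := (τ - 2) • a + τ • b with hy
  have k1 := dt_self_nonneg ((u - x) + μ • (v - y))
  have k2 := dt_self_nonneg (v - y)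
  have k3 : 0 ≤ (1 - μ ^ 2) * dt (v - y) (v - y) := mul_nonneg (by nlinarith) k2
  have ex : dt x x = 8 := by
    simp only [hx, dt_add_left, dt_add_right, dt_smul_left, dt_smul_right, haa, hbb, hab, hba]
    linear_combination (4 * τ) * ht
  have ey : dt y y = 8 := by
    simp only [hy, dt_add_left, dt_add_right, dt_smul_left, dt_smul_right, haa, hbb, hab, hba]
    linear_combination (4 * τ) * ht
  have exy : dt x y = 0 := by
    simp only [hx, hy, dt_add_left, dt_add_right, dt_smul_left, dt_smul_right, haa, hbb, hab, hba]
    linear_combination (4 * τ) * ht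
  -- the gradient of the quadratic form at `(x, y)` is a multiple of `(a, b)`
  have gu : dt u x + μ * dt u y = (8 - 4 * τ) * dt a u := by
    simp only [hx, hy, hμ, dt_add_right, dt_smul_right, dt_comm u a, dt_comm u b]
    linear_combination (2 * dt a u + 2 * dt b u) * ht
  have gv : dt v y + μ * dt v x = (8 - 4 * τ) * dt b v := by
    simp only [hx, hy, hμ, dt_add_right, dt_smul_right, dt_comm v a, dt_comm v b]
    linear_combination (2 * dt a v + 2 * dt b v) * ht
  have key : dt ((u - x) + μ • (v - y)) ((u - x) + μ • (v - y))
      + (1 - μ ^ 2) * dt (v - y) (v - y) =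
      dt u u + dt v v + 2 * μ * dt u v - 2 * (dt u x + μ * dt u y)
        - 2 * (dt v y + μ * dt v x) + dt x x + dt y y + 2 * μ * dt x y := by
    simp only [dt, Pi.add_apply, Pi.sub_apply, Pi.smul_apply, smul_eq_mul]; ring
  rw [gu, gv, ex, ey, exy] at key
  have l1 : 0 ≤ (8 - 4 * τ) * (dt a u - 2 * τ ^ 2) := mul_nonneg (by linarith) (by linarith)
  have l2 : 0 ≤ (8 - 4 * τ) * (dt b v - 2 * τ ^ 2) := mul_nonneg (by linarith) (by linarith)
  have l3 : (8 - 4 * τ) * (2 * τ ^ 2) = 8 := by linear_combination (8 - 8 * τ) * ht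
  nlinarith

theorem edge_neg {a b u v : Fin 3 → ℝ} (ha : IsAx a) (hb : IsAx b) (hab : dt a b = -τ)
    (hu : 2 * τ ^ 2 ≤ dt a u) (hv : 2 * τ ^ 2 ≤ dt b v) :
    16 ≤ dt u u + dt v v - 2 * (2 * τ - 3) * dt u v := by
  have h := edge_pos (v := -v) ha hb.neg (by rw [dt_neg_right]; linarith) hu
    (by rw [dt_neg_right, dt_neg_left]; linarith)
  simp only [dt_neg_right, dt_neg_left] at h
  linarith

/-! ### Polynomial inequalities for Selling parameters -/

theorem m2 {a b c d : ℝ} (h : a ≤ b) (h' : c ≤ d) : 0 ≤ (b - a) * (d - c) :=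
  mul_nonneg (sub_nonneg.2 h) (sub_nonneg.2 h')

theorem m3 {a b c d e f : ℝ} (h : a ≤ b) (h' : c ≤ d) (h'' : e ≤ f) :
    0 ≤ (b - a) * (d - c) * (f - e) :=
  mul_nonneg (m2 h h') (sub_nonneg.2 h'')

/-- The spanning-tree polynomial is at least `256` when `b₀` is long. The variables `a`, ..., `f` are
the Selling parameters of the pairs `01`, `02`, `03`, `12`, `13`, `23`, so that `n0`, ..., `n3` bound
`|bᵢ|²` and `c1`, `c3` bound `|b₀ + b₁|²`, `|b₀ + b₃|²`; the ordering of `a, b, c` is no loss of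
generality. The difference is a nonnegative linear combination of products of the hypotheses. -/
theorem polyA (a b c d e f : ℝ) (ha : 0 ≤ a) (hb : 0 ≤ b) (hc : 0 ≤ c) (hd : 0 ≤ d) (he : 0 ≤ e)
    (hf : 0 ≤ f) (n0 : 7577 / 1000 ≤ a + b + c) (n1 : 7577 / 1000 ≤ a + d + e)
    (n2 : 7577 / 1000 ≤ b + d + f) (n3 : 7577 / 1000 ≤ c + e + f) (c1 : 7577 / 1000 ≤ b + c + d + e)
    (c3 : 7577 / 1000 ≤ a + b + e + f) (t : 4569 / 500 ≤ a + b + c) (o1 : b ≤ a) (o2 : c ≤ b) :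
    256 ≤ a * b * c + a * b * e + a * b * f + a * c * d + a * c * f + a * d * e +
      a * d * f + a * e * f + b * c * d + b * c * e + b * d * e + b * d * f + b * e * f +
      c * d * e + c * d * f + c * e * f := by
  linarith [
    m3 hc he t, m3 n3 o2 o2, m3 hb hc c1, m3 hb c1 o1, m3 hc hd n3, m3 hf n3 o2, m3 hc hd he,
    m3 hd he he, m3 hd hd n1, m2 hb n3, m3 n1 n2 n3, m2 hc n2, m3 hb hb hd, m3 ha hc c1,
    m3 hd hf t, m2 hb n2, m3 ha hc n3, m3 n2 n3 t, m3 he hf t, m3 hc hc n2, m3 ha he t,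
    m3 hb hf c1, m3 hc n1 o2, m3 ha hd he, m3 n3 t t, m3 hd hf o2, m3 hb hf n1,
    m3 hb n3 o1, m3 hc hd c3, m2 c1 o1, m2 hf n3, m3 ha hf c1, m2 hc n1, m3 hb hb n2,
    m3 hc hc n3, m3 hb hd hf, m3 hb he t, m2 hd c3, m3 n3 c1 t, m3 hf t o2, m3 n1 o1 o2,
    m3 ha he n2, m3 hb hd he, m3 hb hc n1, m3 hc hf n1, m3 hf hf n3, m3 hd hf n0, m3 hb hc n2,
    m3 hc n3 o1, m3 hd hd t, m2 hf c1, m3 hd n3 o1, m3 hd o1 o1, m3 he c1 o1, m3 hd hd c1,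
    m3 hc c1 o2, m3 hb he n2, m3 hc hf c1, m3 ha hc n2, m3 t o1 o1, m2 he t, m3 hc he n2,
    m3 he he n3, m2 hf n1, m3 he o1 o2, m3 ha hd n3, m3 he n3 o2, m3 hd he n0, m3 n1 n3 c1]

/-- The spanning-tree polynomial is at least `256` when `b₀ + b₁` is long, and `q1`, `q2` (rounded
forms of the inequalities `edge_pos`, `edge_neg`) hold for the pairs `b₀, b₂` and `b₁, b₃`. The
variables are those of `polyA`; here `d ≤ c`. -/
theorem polyB1 (a b c d e f : ℝ) (ha : 0 ≤ a) (hb : 0 ≤ b) (hc : 0 ≤ c) (hd : 0 ≤ d) (he : 0 ≤ e)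
    (hf : 0 ≤ f) (n0 : 7577 / 1000 ≤ a + b + c) (n1 : 7577 / 1000 ≤ a + d + e)
    (n2 : 7577 / 1000 ≤ b + d + f) (n3 : 7577 / 1000 ≤ c + e + f) (c2 : 7577 / 1000 ≤ a + c + d + f)
    (c3 : 7577 / 1000 ≤ a + b + e + f) (q1 : 16 ≤ a + (191 / 125) * b + c + d + f)
    (q2 : 16 ≤ a + c + d + (12361 / 5000) * e + f)
    (t : 4569 / 500 ≤ b + c + d + e) (o1 : f ≤ a) (o2 : d ≤ c) :
    256 ≤ a * b * c + a * b * e + a * b * f + a * c * d + a * c * f + a * d * e +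
      a * d * f + a * e * f + b * c * d + b * c * e + b * d * e + b * d * f + b * e * f +
      c * d * e + c * d * f + c * e * f := by
  linarith [
    m3 he n2 o1, m3 he he n1, m3 hc he n1, m3 hc he c2, m3 hf hf o1, m3 hf hf t, m3 n2 n2 q1,
    m3 hc n2 o2, m3 hd hf n0, m3 hc n3 o1, m3 hb he c2, m3 he he q1, m3 hb hd n3, m3 hf hf q2,
    m3 ha n2 o2, m2 n2 o2, m3 he hf o1, m3 hb hd o2, m3 hc hd c3, m3 hd he o2, m3 hd hf t,
    m2 hb n1, m3 hb n2 o2, m3 ha hb hc, m3 hb hf c2, m3 he hf c2, m2 ha n3, m3 n1 o2 o2,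
    m3 c3 o1 o1, m2 ha n2, m3 hd n3 o1, m3 q1 o1 o1, m3 he n2 o2, m3 hb hd q2, m3 hd hf q2,
    m3 ha hc he, m3 hc hf n1, m2 hd c3, m3 he hf n0, m2 hc n2, m3 hd hf c3,
    m3 he n1 o2, m3 hd hf o1, m3 hc t o2, m3 ha hd c3, m3 ha hf t, m3 hb hb n1, m3 n2 o1 o1,
    m3 q2 q2 q2, m2 hb q2, m3 ha he hf, m3 hb hc n1, m3 ha hb n3, m3 hc n2 o1, m3 hc hf o1,
    m3 n3 o1 o1, m3 hb hf o1, m3 hd hd o2, m2 hc c3, m3 ha hd he, m3 hb hf q2, m3 ha hb he,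
    m3 hd he q1, m2 hd q2, m2 he q1, m3 q1 o2 o2, m3 ha hc n2, m3 hd he c2, m3 hd hf q1,
    m3 hd hd n3, m3 hd he n0, m2 hf q2, m3 hf n1 o2]

/-- The analogue of `polyB1` for `c ≤ d`. -/
theorem polyB2 (a b c d e f : ℝ) (ha : 0 ≤ a) (hb : 0 ≤ b) (hc : 0 ≤ c) (hd : 0 ≤ d) (he : 0 ≤ e)
    (hf : 0 ≤ f) (n0 : 7577 / 1000 ≤ a + b + c) (n1 : 7577 / 1000 ≤ a + d + e)
    (n2 : 7577 / 1000 ≤ b + d + f) (n3 : 7577 / 1000 ≤ c + e + f) (c2 : 7577 / 1000 ≤ a + c + d + f)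
    (c3 : 7577 / 1000 ≤ a + b + e + f) (q1 : 16 ≤ a + (191 / 125) * b + c + d + f)
    (q2 : 16 ≤ a + c + d + (12361 / 5000) * e + f)
    (t : 4569 / 500 ≤ b + c + d + e) (o1 : f ≤ a) (o2 : c ≤ d) :
    256 ≤ a * b * c + a * b * e + a * b * f + a * c * d + a * c * f + a * d * e +
      a * d * f + a * e * f + b * c * d + b * c * e + b * d * e + b * d * f + b * e * f +
      c * d * e + c * d * f + c * e * f := by
  linarith [
    m3 he hf n0, m3 hd he n0, m2 he q1, m3 hb hc c2, m3 hc hf o1, m3 he hf c2, m3 hc he o2,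
    m3 he n3 o1, m2 hd n3, m3 q1 o2 o2, m3 he n3 o2, m3 n3 o1 o1, m3 hb n2 c3, m3 hc n3 o1,
    m3 hd hf o1, m3 ha hb n2, m3 hb hc n1, m3 hc hf q2, m3 he he he, m3 ha hf t, m3 ha he n2,
    m3 hf hf o1, m3 hc hc o2, m2 ha n3, m3 hb he c2, m3 hc hf t, m3 hb hf o1, m3 hc hf q1,
    m3 q1 o1 o1, m3 hb hf q2, m3 t o2 o2, m3 hc he n2, m3 ha he hf, m3 hb hc q2, m3 hb n3 o1,
    m2 hd c3, m2 ha q2, m3 n2 o1 o1, m2 hc q1, m2 hc q2, m3 hb hf c2, m3 hc n2 o1, m3 ha ha c3,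
    m2 hd q2, m2 ha n2, m2 ha t, m3 hf hf t, m3 n3 n3 n3, m3 n3 n3 q1, m3 hc hd c3, m3 hb n0 o2,
    m3 he hf o1, m2 n0 o2, m3 ha hc n2, m3 q2 o1 o2, m3 hb n2 o1, m3 hb n3 o2, m3 hf hf q2,
    m3 hc hf c3, m3 hb hb n3, m2 he q2, m2 hf q2, m3 n3 o2 o2, m3 hc hf o2, m3 ha n3 o2,
    m3 hb hb q1, m3 n0 o2 o2, m3 hb hf n1, m3 hc he n1, m3 hd n3 o1, m3 hc hc c3, m2 hb q2,
    m3 ha he c2, m3 ha hd he, m3 ha hc o2, m3 hf n0 o2, m2 n3 o2, m3 q1 q1 q1, m3 hc he q1,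
    m3 ha hb c2]

/-! ### Obtuse superbases -/

/-- The determinant of three vectors of `ℝ³`. -/
def vol (u v w : Fin 3 → ℝ) : ℝ :=
  u 0 * (v 1 * w 2 - v 2 * w 1) - u 1 * (v 0 * w 2 - v 2 * w 0) + u 2 * (v 0 * w 1 - v 1 * w 0)

theorem vol_sq (u v w : Fin 3 → ℝ) : vol u v w ^ 2 =
    dt u u * (dt v v * dt w w - dt v w ^ 2) - dt u v * (dt u v * dt w w - dt v w * dt u w)
      + dt u w * (dt u v * dt v w - dt v v * dt u w) := by
  unfold vol dt; ring

/-- An obtuse superbase of a lattice all of whose nonzero vectors are `Good`. The vectors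
`n₀b₀ + n₁b₁ + n₂b₂ + n₃b₃` with integers `nᵢ` not all equal are the nonzero lattice vectors. -/
structure SB (b0 b1 b2 b3 : Fin 3 → ℝ) : Prop where
  sum : b0 + b1 + b2 + b3 = 0
  good : ∀ n0 n1 n2 n3 : ℤ, ¬(n0 = n1 ∧ n1 = n2 ∧ n2 = n3) →
    Good ((n0 : ℝ) • b0 + (n1 : ℝ) • b1 + (n2 : ℝ) • b2 + (n3 : ℝ) • b3)
  o01 : dt b0 b1 ≤ 0
  o02 : dt b0 b2 ≤ 0
  o03 : dt b0 b3 ≤ 0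
  o12 : dt b1 b2 ≤ 0
  o13 : dt b1 b3 ≤ 0
  o23 : dt b2 b3 ≤ 0

section SB

variable {b0 b1 b2 b3 : Fin 3 → ℝ}

theorem SB.swap01 (h : SB b0 b1 b2 b3) : SB b1 b0 b2 b3 where
  sum := by rw [← h.sum]; abel
  good n0 n1 n2 n3 hn := by
    have := h.good n1 n0 n2 n3 (by omega)
    rwa [add_comm ((n1 : ℝ) • b0)] at this
  o01 := by rw [dt_comm]; exact h.o01
  o02 := h.o12
  o03 := h.o13
  o12 := h.o02
  o13 := h.o03
  o23 := h.o23

theorem SB.rot (h : SB b0 b1 b2 b3) : SB b1 b2 b3 b0 where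
  sum := by rw [← h.sum]; abel
  good n0 n1 n2 n3 hn := by
    have := h.good n3 n0 n1 n2 (by omega)
    convert this using 1; abel
  o01 := h.o12
  o02 := h.o13
  o03 := by rw [dt_comm]; exact h.o01
  o12 := h.o23
  o13 := by rw [dt_comm]; exact h.o02
  o23 := by rw [dt_comm]; exact h.o03

theorem SB.swap12 (h : SB b0 b1 b2 b3) : SB b0 b2 b1 b3 := h.rot.swap01.rot.rot.rot

theorem SB.swap23 (h : SB b0 b1 b2 b3) : SB b0 b1 b3 b2 := h.rot.rot.swap01.rot.rot

theorem SB.eq3 (h : SB b0 b1 b2 b3) : b3 = -(b0 + b1 + b2) := by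
  have := h.sum
  exact (neg_eq_of_add_eq_zero_right this).symm

theorem vol_swap01 (u v w : Fin 3 → ℝ) : vol u v w = -vol v u w := by unfold vol; ring

theorem vol_swap12 (u v w : Fin 3 → ℝ) : vol u v w = -vol u w v := by unfold vol; ring

theorem SB.vol_rot (h : SB b0 b1 b2 b3) : vol b0 b1 b2 = -vol b1 b2 b3 := by
  rw [h.eq3]; simp only [vol, Pi.neg_apply, Pi.add_apply]; ring

theorem SB.vol_swap23 (h : SB b0 b1 b2 b3) : vol b0 b1 b2 = -vol b0 b1 b3 := by
  rw [h.eq3]; simp only [vol, Pi.neg_apply, Pi.add_apply]; ring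

theorem SB.norm0 (h : SB b0 b1 b2 b3) : dt b0 b0 = -dt b0 b1 + -dt b0 b2 + -dt b0 b3 := by
  rw [h.eq3]; simp only [dt_neg_right, dt_add_right]; ring

theorem SB.norm1 (h : SB b0 b1 b2 b3) : dt b1 b1 = -dt b0 b1 + -dt b1 b2 + -dt b1 b3 := by
  rw [h.swap01.norm0, dt_comm b1 b0]

theorem SB.norm2 (h : SB b0 b1 b2 b3) : dt b2 b2 = -dt b0 b2 + -dt b1 b2 + -dt b2 b3 := by
  rw [h.swap12.norm1, dt_comm b2 b1]

theorem SB.norm3 (h : SB b0 b1 b2 b3) : dt b3 b3 = -dt b0 b3 + -dt b1 b3 + -dt b2 b3 := by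
  rw [h.swap23.norm2, dt_comm b3 b2]

theorem dt_add_self (u v : Fin 3 → ℝ) : dt (u + v) (u + v) = dt u u + dt v v + 2 * dt u v := by
  rw [dt_add_left, dt_add_right, dt_add_right, dt_comm v u]; ring

theorem dt_sub_self (u v : Fin 3 → ℝ) : dt (u - v) (u - v) = dt u u + dt v v - 2 * dt u v := by
  rw [dt_sub_left, dt_sub_right, dt_sub_right, dt_comm v u]; ring

/-- In terms of the Selling parameters `-bᵢ · bⱼ`, the squared determinant is the sum over the
sixteen spanning trees of the complete graph on four vertices. -/
theorem SB.tree (h : SB b0 b1 b2 b3) {a b c d e f : ℝ} (ha : a = -dt b0 b1) (hb : b = -dt b0 b2)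
    (hc : c = -dt b0 b3) (hd : d = -dt b1 b2) (he : e = -dt b1 b3) (hf : f = -dt b2 b3) :
    vol b0 b1 b2 ^ 2 = a * b * c + a * b * e + a * b * f + a * c * d + a * c * f + a * d * e +
      a * d * f + a * e * f + b * c * d + b * c * e + b * d * e + b * d * f + b * e * f +
      c * d * e + c * d * f + c * e * f := by
  rw [vol_sq, h.norm0, h.norm1, h.norm2, ← ha, ← hb, ← hc, ← hd, ← he, ← hf,
    neg_eq_iff_eq_neg.1 (eq_comm.1 ha), neg_eq_iff_eq_neg.1 (eq_comm.1 hb), neg_eq_iff_eq_neg.1 (eq_comm.1 hd)]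
  ring

theorem SB.good0 (h : SB b0 b1 b2 b3) : Good b0 := by
  simpa using h.good 1 0 0 0 (by omega)

theorem SB.good_add (h : SB b0 b1 b2 b3) : Good (b0 + b1) := by
  simpa using h.good 1 1 0 0 (by omega)

theorem SB.good_sub (h : SB b0 b1 b2 b3) : Good (b0 - b1) := by
  simpa [sub_eq_add_neg] using h.good 1 (-1) 0 0 (by omega)

/-- The lower bounds on the seven kinds of Voronoi vectors, in terms of Selling parameters. -/
theorem SB.bounds (h : SB b0 b1 b2 b3) {a b c d e f : ℝ} (ha : a = -dt b0 b1) (hb : b = -dt b0 b2)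
    (hc : c = -dt b0 b3) (hd : d = -dt b1 b2) (he : e = -dt b1 b3) (hf : f = -dt b2 b3) :
    7577 / 1000 ≤ a + b + c ∧ 7577 / 1000 ≤ a + d + e ∧ 7577 / 1000 ≤ b + d + f ∧
    7577 / 1000 ≤ c + e + f ∧ 7577 / 1000 ≤ b + c + d + e ∧ 7577 / 1000 ≤ a + c + d + f ∧
    7577 / 1000 ≤ a + b + e + f := by
  have g0 := h.good0.sq
  have g1 := h.swap01.good0.sq
  have g2 := h.rot.rot.good0.sq
  have g3 := h.rot.rot.rot.good0.sq
  have g4 := h.good_add.sq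
  have g5 := h.swap12.good_add.sq
  have g6 := h.rot.rot.rot.good_add.sq
  rw [dt_add_self] at g4 g5 g6
  rw [dt_comm b3 b0] at g6
  rw [h.norm0] at g0 g4 g5 g6
  rw [h.norm1] at g1 g4
  rw [h.norm2] at g2 g5
  rw [h.norm3] at g3 g6
  norm_num at g0 g1 g2 g3 g4 g5 g6
  refine ⟨?_, ?_, ?_, ?_, ?_, ?_, ?_⟩ <;> linarith

theorem SB.long0_sorted (h : SB b0 b1 b2 b3) (l : 9.138 ≤ dt b0 b0) (o1 : dt b0 b1 ≤ dt b0 b2)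
    (o2 : dt b0 b2 ≤ dt b0 b3) : 256 ≤ vol b0 b1 b2 ^ 2 := by
  rw [h.tree rfl rfl rfl rfl rfl rfl]
  obtain ⟨k0, k1, k2, k3, k4, k5, k6⟩ := h.bounds rfl rfl rfl rfl rfl rfl
  have := h.o01; have := h.o02; have := h.o03; have := h.o12; have := h.o13; have := h.o23
  rw [h.norm0] at l
  apply polyA <;> first | assumption | linarith

/-- If one of the vectors of the superbase is long, then the determinant is large. -/
theorem SB.long0 (h : SB b0 b1 b2 b3) (l : 9.138 ≤ dt b0 b0) : 256 ≤ vol b0 b1 b2 ^ 2 := by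
  have e1 : vol b0 b1 b2 ^ 2 = vol b0 b2 b1 ^ 2 := by rw [vol_swap12, neg_sq]
  have e2 : vol b0 b1 b2 ^ 2 = vol b0 b1 b3 ^ 2 := by rw [h.vol_swap23, neg_sq]
  have e3 : vol b0 b1 b2 ^ 2 = vol b0 b2 b3 ^ 2 := by rw [e1, h.swap12.vol_swap23, neg_sq]
  have e4 : vol b0 b1 b2 ^ 2 = vol b0 b3 b1 ^ 2 := by rw [e2, vol_swap12, neg_sq]
  have e5 : vol b0 b1 b2 ^ 2 = vol b0 b3 b2 ^ 2 := by rw [e3, vol_swap12, neg_sq]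
  rcases le_total (dt b0 b1) (dt b0 b2) with x | x <;>
  rcases le_total (dt b0 b2) (dt b0 b3) with y | y <;>
  rcases le_total (dt b0 b1) (dt b0 b3) with z | z
  · exact h.long0_sorted l x y
  · exact h.long0_sorted l x y
  · rw [e2]; exact h.swap23.long0_sorted l z y
  · rw [e4]; exact h.swap23.swap12.long0_sorted l z x
  · rw [e1]; exact h.swap12.long0_sorted l x z
  · rw [e3]; exact h.swap12.swap23.long0_sorted l y z
  · rw [e5]; exact h.swap12.swap23.swap12.long0_sorted l y x
  · rw [e5]; exact h.swap12.swap23.swap12.long0_sorted l y x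

/-- If `b₀ + b₁` is long and the sharp edge inequalities hold for the two opposite pairs
`b₀, b₂` and `b₁, b₃`, then the determinant is large. -/
theorem SB.long_add (h : SB b0 b1 b2 b3) (l : 9.138 ≤ dt (b0 + b1) (b0 + b1))
    (q1 : 16 ≤ dt b0 b0 + dt b2 b2 + 2 * (2 * τ - 3) * dt b0 b2)
    (q2 : 16 ≤ dt b1 b1 + dt b3 b3 - 2 * (2 * τ - 3) * dt b1 b3) : 256 ≤ vol b0 b1 b2 ^ 2 := by
  have e1 : vol b0 b1 b2 ^ 2 = vol b2 b3 b0 ^ 2 := by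
    rw [h.vol_rot, h.rot.vol_rot, neg_neg]
  have t1 := tau_gt
  have t2 := tau_lt
  have := h.o01; have := h.o02; have := h.o03; have := h.o12; have := h.o13; have := h.o23
  have u1 : 2 * (2 * τ - 3) * dt b0 b2 ≤ 0.472 * dt b0 b2 := by nlinarith
  have u2 : 0.4722 * dt b1 b3 ≤ 2 * (2 * τ - 3) * dt b1 b3 := by nlinarith
  rw [dt_add_self, h.norm0, h.norm1] at l
  rw [h.norm0, h.norm2] at q1
  rw [h.norm1, h.norm3] at q2
  norm_num at l u1 u2
  rcases le_total (dt b0 b1) (dt b2 b3) with x | x <;>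
  rcases le_total (dt b0 b3) (dt b1 b2) with y | y
  · obtain ⟨k0, k1, k2, k3, k4, k5, k6⟩ := h.bounds rfl rfl rfl rfl rfl rfl
    rw [h.tree rfl rfl rfl rfl rfl rfl]
    apply polyB1 <;> first | assumption | linarith
  · obtain ⟨k0, k1, k2, k3, k4, k5, k6⟩ := h.bounds rfl rfl rfl rfl rfl rfl
    rw [h.tree rfl rfl rfl rfl rfl rfl]
    apply polyB2 <;> first | assumption | linarith
  · obtain ⟨k0, k1, k2, k3, k4, k5, k6⟩ := h.rot.rot.bounds rfl rfl rfl rfl rfl rfl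
    rw [e1, h.rot.rot.tree rfl rfl rfl rfl rfl rfl]
    have c1 := dt_comm b2 b0; have c2 := dt_comm b2 b1; have c3 := dt_comm b3 b0
    have c4 := dt_comm b3 b1
    apply polyB2 <;> first | assumption | linarith
  · obtain ⟨k0, k1, k2, k3, k4, k5, k6⟩ := h.rot.rot.bounds rfl rfl rfl rfl rfl rfl
    rw [e1, h.rot.rot.tree rfl rfl rfl rfl rfl rfl]
    have c1 := dt_comm b2 b0; have c2 := dt_comm b2 b1; have c3 := dt_comm b3 b0
    have c4 := dt_comm b3 b1
    apply polyB1 <;> first | assumption | linarith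

end SB

/-! ### The determinant inequality in an adapted frame -/

theorem cubic_lower {c x y z : ℝ} (hx : |x| ≤ c) (hy : |y| ≤ c) (hz : |z| ≤ c) :
    -(c / 3) * (x ^ 2 + y ^ 2 + z ^ 2) ≤ x * y * z := by
  -- `xyz ≥ -(c/2)(y² + z²)` and its two analogues are averaged
  have key : ∀ x y z : ℝ, |x| ≤ c → -(c / 2) * (y ^ 2 + z ^ 2) ≤ x * y * z := by
    intro x y z h
    have h' := abs_le.1 h
    nlinarith [mul_nonneg (by linarith : 0 ≤ c + x) (sq_nonneg (y + z)),
      mul_nonneg (by linarith : 0 ≤ c - x) (sq_nonneg (y - z))]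
  linarith [key x y z hx, key y z x hy, key z x y hz]

theorem diag_lower {q r : ℝ} (h : 2 * τ ^ 2 ≤ τ * q + r) (n : q ^ 2 + r ^ 2 ≤ 9.138) :
    1.68 ≤ q := by
  have t1 := tau_gt
  have t2 := tau_lt
  have t3 := tau_sq
  by_contra hq
  push Not at hq
  rcases le_or_gt 0 q with h0 | h0
  · have : 5.236 - 1.61804 * q ≤ r := by nlinarith
    nlinarith
  · have : 5.236 ≤ r := by nlinarith
    nlinarith

theorem diag_upper {q r : ℝ} (h : 2 * τ ^ 2 ≤ τ * q + r) (n : q ^ 2 + r ^ 2 ≤ 9.138) :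
    r ≤ 2.52 := by
  have := diag_lower h n
  by_contra hr
  push Not at hr
  nlinarith

theorem diag_sq {q r : ℝ} (h : 2 * τ ^ 2 ≤ τ * q + r) : 7.577 ≤ q ^ 2 + r ^ 2 := by
  have t1 := tau_gt
  have t2 := tau_lt
  have t3 := tau_sq
  have h1 : 5.236 ≤ τ * q + r := by nlinarith
  have h2 : (5.236 : ℝ) ^ 2 ≤ (τ * q + r) ^ 2 := by gcongr
  have h3 : (τ * q + r) ^ 2 + (τ * r - q) ^ 2 = (τ + 2) * (q ^ 2 + r ^ 2) := by
    linear_combination (q ^ 2 + r ^ 2) * t3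
  nlinarith [sq_nonneg (τ * r - q), sq_nonneg q, sq_nonneg r]

theorem diag_slack {q r : ℝ} (n : q ^ 2 + r ^ 2 ≤ 9.138) : τ * q + r - 2 * τ ^ 2 ≤ 0.52 := by
  have t1 := tau_gt
  have t2 := tau_lt
  have t3 := tau_sq
  have h3 : (τ * q + r) ^ 2 + (τ * r - q) ^ 2 = (τ + 2) * (q ^ 2 + r ^ 2) := by
    linear_combination (q ^ 2 + r ^ 2) * t3
  have h4 : (τ * q + r) ^ 2 ≤ 5.754 ^ 2 := by
    nlinarith [sq_nonneg (τ * r - q), sq_nonneg q, sq_nonneg r]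
  have h5 := abs_le_of_sq_le_sq h4 (by norm_num)
  linarith [(abs_le.1 h5).2]

/-- An off-diagonal product `s * y` is nearly nonpositive when `y + τs` is small. -/
theorem offdiag_lower {s y d r : ℝ} (h : |y + τ * s| ≤ d) (hd : d ≤ 0.52) (r1 : 1.68 ≤ r)
    (r2 : r ≤ 2.52) : 5 / 12 * (s ^ 2 + y ^ 2) - 0.312 * d ≤ -(s * y * r) := by
  have t1 := tau_gt
  have t2 := tau_lt
  have t3 := tau_sq
  have hd0 : 0 ≤ d := (abs_nonneg _).trans h
  have hY : (y + τ * s) ^ 2 ≤ d ^ 2 := sq_le_sq' (abs_le.1 h).1 (abs_le.1 h).2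
  have hd2 : d ^ 2 ≤ 0.52 * d := by nlinarith
  have e1 : 4 * τ * (s * y) = (y + τ * s) ^ 2 - (y - τ * s) ^ 2 := by ring
  have e2 : s ^ 2 + y ^ 2 ≤ ((y + τ * s) ^ 2 + (y - τ * s) ^ 2) / 2 := by
    have : 0 ≤ (τ ^ 2 - 1) * s ^ 2 := mul_nonneg (by linarith) (sq_nonneg s)
    linarith
  set X := (y - τ * s) ^ 2 with hX
  set Y := (y + τ * s) ^ 2 with hY'
  have hX0 : 0 ≤ X := sq_nonneg _
  have hY0 : 0 ≤ Y := sq_nonneg _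
  have e3 : 4 * τ * (-(s * y * r)) = r * X - r * Y := by linear_combination (-r) * e1
  have e4 : 1.68 * X ≤ r * X := by gcongr
  have e5 : r * Y ≤ 2.52 * Y := by gcongr
  have e6 : 4 * τ * (5 / 12 * (s ^ 2 + y ^ 2)) ≤ 6.4722 * (5 / 12 * ((Y + X) / 2)) := by
    gcongr
    linarith
  have e7 : 6.472 * (0.312 * d) ≤ 4 * τ * (0.312 * d) := by
    gcongr
    linarith
  have e8 : 4 * τ * (5 / 12 * (s ^ 2 + y ^ 2) - 0.312 * d) ≤ 4 * τ * (-(s * y * r)) := by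
    linarith
  exact le_of_mul_le_mul_left e8 (by linarith)

/-- The diagonal contribution: `pqr ≥ 8` with a margin proportional to the total slack. -/
theorem diag_prod {p q r : ℝ} (h1 : 2 * τ ^ 2 ≤ τ * p + q) (h2 : 2 * τ ^ 2 ≤ τ * q + r)
    (h3 : 2 * τ ^ 2 ≤ τ * r + p) (n1 : p ^ 2 + q ^ 2 ≤ 9.138) (n2 : q ^ 2 + r ^ 2 ≤ 9.138)
    (n3 : r ^ 2 + p ^ 2 ≤ 9.138) :
    8 + 0.312 * ((τ * p + q - 2 * τ ^ 2) + (τ * q + r - 2 * τ ^ 2) + (τ * r + p - 2 * τ ^ 2))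
      ≤ p * q * r := by
  have t1 := tau_gt
  have t2 := tau_lt
  have t3 := tau_sq
  have p1 := diag_lower h1 n1
  have q1 := diag_lower h2 n2
  have r1 := diag_lower h3 n3
  have p2 := diag_upper h3 n3
  have q2 := diag_upper h1 n1
  have r2 := diag_upper h2 n2
  have s1 := diag_slack n1
  have s2 := diag_slack n2
  have s3 := diag_slack n3
  set d1 := τ * p + q - 2 * τ ^ 2 with hd1
  set d2 := τ * q + r - 2 * τ ^ 2 with hd2
  set d3 := τ * r + p - 2 * τ ^ 2 with hd3
  have g1 : 0 ≤ d1 := by linarith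
  have g2 : 0 ≤ d2 := by linarith
  have g3 : 0 ≤ d3 := by linarith
  obtain ⟨α, rfl⟩ : ∃ α, p = 2 + α := ⟨p - 2, by ring⟩
  obtain ⟨β, rfl⟩ : ∃ β, q = 2 + β := ⟨q - 2, by ring⟩
  obtain ⟨γ, rfl⟩ : ∃ γ, r = 2 + γ := ⟨r - 2, by ring⟩
  have e0 : d1 + d2 + d3 = (τ + 1) * (α + β + γ) := by
    rw [hd1, hd2, hd3]; linear_combination (-6) * t3
  have e1 : d1 ^ 2 + d2 ^ 2 + d3 ^ 2
      = 2 * (α ^ 2 + β ^ 2 + γ ^ 2) + τ * (α + β + γ) ^ 2 := by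
    have f1 : d1 = τ * α + β := by rw [hd1]; linear_combination (-2) * t3
    have f2 : d2 = τ * β + γ := by rw [hd2]; linear_combination (-2) * t3
    have f3 : d3 = τ * γ + α := by rw [hd3]; linear_combination (-2) * t3
    rw [f1, f2, f3]
    linear_combination (α ^ 2 + β ^ 2 + γ ^ 2) * t3
  have hσ : 0 ≤ α + β + γ := by
    by_contra hneg
    push Not at hneg
    have := mul_neg_of_pos_of_neg (by linarith : 0 < τ + 1) hneg
    linarith
  have h27 : (τ + 1) * (α + β + γ) ≤ 2.62 * (α + β + γ) := by gcongr; linarith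
  have hd : d1 ^ 2 + d2 ^ 2 + d3 ^ 2 ≤ 0.52 * (d1 + d2 + d3) := by
    linarith [mul_nonneg g1 (sub_nonneg.2 s1), mul_nonneg g2 (sub_nonneg.2 s2),
      mul_nonneg g3 (sub_nonneg.2 s3)]
  have hsq : α ^ 2 + β ^ 2 + γ ^ 2 ≤ 0.7 * (α + β + γ) := by
    have : 0 ≤ τ * (α + β + γ) ^ 2 := mul_nonneg (by linarith) (sq_nonneg _)
    linarith
  have hc := cubic_lower (c := 0.52) (x := α) (y := β) (z := γ) (abs_le.2 ⟨by linarith, by linarith⟩)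
    (abs_le.2 ⟨by linarith, by linarith⟩) (abs_le.2 ⟨by linarith, by linarith⟩)
  rw [e0]
  linarith [sq_nonneg (α + β + γ)]

theorem abs_le_of_sq_le {x : ℝ} (h : x ^ 2 ≤ 1.561) : |x| ≤ 5 / 4 :=
  abs_le_of_sq_le_sq (by linarith : x ^ 2 ≤ (5 / 4) ^ 2) (by norm_num)

/-- The rows `(p, s, w)`, `(y, q, t)`, `(u, z, r)` are the coordinates along `e₁`, `e₂`, `e₃` of
three vectors `f₁`, `f₂`, `f₃`, whose six sums and differences `±fᵢ ± fⱼ` up to sign lie in the caps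
with axes `(τ, ±1, 0)`, `(0, τ, ±1)`, `(±1, 0, τ)`; each of `h1`, `h2`, `h3` combines two caps. The
determinant is at least `8`, with equality when `fᵢ = 2eᵢ`. -/
theorem final_ineq {p q r s t u w y z : ℝ}
    (h1 : |y + τ * s| ≤ τ * p + q - 2 * τ ^ 2) (h2 : |z + τ * t| ≤ τ * q + r - 2 * τ ^ 2)
    (h3 : |w + τ * u| ≤ τ * r + p - 2 * τ ^ 2)
    (n1 : (p ^ 2 + y ^ 2 + u ^ 2) + (s ^ 2 + q ^ 2 + z ^ 2) ≤ 9.138)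
    (n2 : (s ^ 2 + q ^ 2 + z ^ 2) + (w ^ 2 + t ^ 2 + r ^ 2) ≤ 9.138)
    (n3 : (w ^ 2 + t ^ 2 + r ^ 2) + (p ^ 2 + y ^ 2 + u ^ 2) ≤ 9.138) :
    8 ≤ p * (q * r - t * z) - s * (y * r - t * u) + w * (y * z - q * u) := by
  have hs := sq_nonneg s
  have ht := sq_nonneg t
  have hu := sq_nonneg u
  have hw := sq_nonneg w
  have hy := sq_nonneg y
  have hz := sq_nonneg z
  have m1 : p ^ 2 + q ^ 2 ≤ 9.138 := by linarith
  have m2 : q ^ 2 + r ^ 2 ≤ 9.138 := by linarith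
  have m3 : r ^ 2 + p ^ 2 ≤ 9.138 := by linarith
  have k1 : 2 * τ ^ 2 ≤ τ * p + q := by linarith [abs_nonneg (y + τ * s)]
  have k2 : 2 * τ ^ 2 ≤ τ * q + r := by linarith [abs_nonneg (z + τ * t)]
  have k3 : 2 * τ ^ 2 ≤ τ * r + p := by linarith [abs_nonneg (w + τ * u)]
  have l1 := diag_sq k1
  have l2 := diag_sq k2
  have l3 := diag_sq k3
  have c1 := cubic_lower (abs_le_of_sq_le (by linarith : s ^ 2 ≤ 1.561))
    (abs_le_of_sq_le (by linarith : t ^ 2 ≤ 1.561)) (abs_le_of_sq_le (by linarith : u ^ 2 ≤ 1.561))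
  have c2 := cubic_lower (abs_le_of_sq_le (by linarith : w ^ 2 ≤ 1.561))
    (abs_le_of_sq_le (by linarith : y ^ 2 ≤ 1.561)) (abs_le_of_sq_le (by linarith : z ^ 2 ≤ 1.561))
  have o1 := offdiag_lower h1 (diag_slack m1) (diag_lower k3 m3) (diag_upper k2 m2)
  have o2 := offdiag_lower h2 (diag_slack m2) (diag_lower k1 m1) (diag_upper k3 m3)
  have o3 := offdiag_lower h3 (diag_slack m3) (diag_lower k2 m2) (diag_upper k1 m1)
  have := diag_prod k1 k2 k3 m1 m2 m3
  linarith

/-! ### Superbases with short vectors -/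

/-- Six axes with the inner products of the fcc configuration are
`(τ, ±1, 0)`, `(-1, 0, ±τ)`, `(0, ±τ, 1)` in a suitable orthonormal frame. -/
theorem frame {a0 a1 a2 a3 c d : Fin 3 → ℝ} (n0 : dt a0 a0 = τ + 2) (n1 : dt a1 a1 = τ + 2)
    (n2 : dt a2 a2 = τ + 2) (n3 : dt a3 a3 = τ + 2) (nc : dt c c = τ + 2) (nd : dt d d = τ + 2)
    (h02 : dt a0 a2 = τ) (h13 : dt a1 a3 = -τ) (h01 : dt a0 a1 = -τ) (h12 : dt a1 a2 = -τ)
    (h23 : dt a2 a3 = -τ) (h30 : dt a3 a0 = -τ) (c0 : dt c a0 = τ) (c1 : dt c a1 = τ)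
    (c2 : dt c a2 = -τ) (c3 : dt c a3 = -τ) (d0 : dt d a0 = -τ) (d1 : dt d a1 = τ)
    (d2 : dt d a2 = τ) (d3 : dt d a3 = -τ) :
    ∃ e1 e2 e3 : Fin 3 → ℝ, (dt e1 e1 = 1 ∧ dt e2 e2 = 1 ∧ dt e3 e3 = 1) ∧
      (dt e1 e2 = 0 ∧ dt e1 e3 = 0 ∧ dt e2 e3 = 0) ∧
      a0 = τ • e1 + e2 ∧ a2 = τ • e1 - e2 ∧ a1 = τ • e3 - e1 ∧ a3 = -(τ • e3) - e1 ∧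
      c = τ • e2 + e3 ∧ d = e3 - τ • e2 := by
  have ht := tau_sq
  have h10 : dt a1 a0 = -τ := by rw [dt_comm, h01]
  have h20 : dt a2 a0 = τ := by rw [dt_comm, h02]
  have h03 : dt a0 a3 = -τ := by rw [dt_comm, h30]
  have h21 : dt a2 a1 = -τ := by rw [dt_comm, h12]
  have h31 : dt a3 a1 = -τ := by rw [dt_comm, h13]
  have h32 : dt a3 a2 = -τ := by rw [dt_comm, h23]
  -- `(τ - 1) / 2 = 1 / (2τ)`
  have hg : (τ - 1) * τ = 1 := by linarith
  have hg2 : τ * ((τ - 1) / 2) = 1 / 2 := by linarith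
  -- the fourth axis is determined by the others
  have key : a1 + a3 + (τ - 1) • (a0 + a2) = 0 := by
    apply eq_zero_of_dt_self
    simp only [dt_add_left, dt_add_right, dt_smul_left, dt_smul_right, n0, n1, n2, n3, h01, h02,
      h03, h10, h12, h13, h20, h21, h23, h30, h31, h32]
    linear_combination (4 * τ - 8) * ht
  set e1 := ((τ - 1) / 2) • (a0 + a2) with he1
  set e2 := (1 / 2 : ℝ) • (a0 - a2) with he2
  set e3 := ((τ - 1) / 2) • (a1 - a3) with he3
  have ee2 : dt e2 e2 = 1 := by
    simp only [he2, dt_sub_left, dt_sub_right, dt_smul_left, dt_smul_right, n0, n2, h02, h20]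
    ring
  have ee3 : dt e3 e3 = 1 := by
    simp only [he3, dt_sub_left, dt_sub_right, dt_smul_left, dt_smul_right, n1, n3, h13, h31]
    linear_combination τ * ht
  have e23 : dt e2 e3 = 0 := by
    simp only [he2, he3, dt_sub_left, dt_sub_right, dt_smul_left, dt_smul_right, h01, h03, h21, h23]
    ring
  have ec2 : dt c e2 = τ := by
    simp only [he2, dt_sub_right, dt_smul_right, c0, c2]; ring
  have ec3 : dt c e3 = 1 := by
    simp only [he3, dt_sub_right, dt_smul_right, c1, c3]; linear_combination ht
  have ed2 : dt d e2 = -τ := by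
    simp only [he2, dt_sub_right, dt_smul_right, d0, d2]; ring
  have ed3 : dt d e3 = 1 := by
    simp only [he3, dt_sub_right, dt_smul_right, d1, d3]; linear_combination ht
  refine ⟨e1, e2, e3, ⟨?_, ee2, ee3⟩, ⟨?_, ?_, e23⟩, ?_, ?_, ?_, ?_, ?_, ?_⟩
  · simp only [he1, dt_add_left, dt_add_right, dt_smul_left, dt_smul_right, n0, n2, h02, h20]
    linear_combination τ * ht
  · simp only [he1, he2, dt_add_left, dt_sub_right, dt_smul_left, dt_smul_right, n0, n2, h02, h20]
    ring
  · simp only [he1, he3, dt_add_left, dt_sub_right, dt_smul_left, dt_smul_right, h01, h03, h21,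
      h23]
    ring
  · rw [he1, he2, smul_smul, hg2]; module
  · rw [he1, he2, smul_smul, hg2]; module
  · rw [he1, he3, smul_smul, hg2]
    linear_combination (norm := module) (1 / 2 : ℝ) • key
  · rw [he1, he3, smul_smul, hg2]
    linear_combination (norm := module) (1 / 2 : ℝ) • key
  · rw [← sub_eq_zero]
    apply eq_zero_of_dt_self
    simp only [dt_sub_left, dt_sub_right, dt_add_left, dt_add_right, dt_smul_left, dt_smul_right]
    rw [dt_comm e3 e2, dt_comm e2 c, dt_comm e3 c, nc, ee2, ee3, e23, ec2, ec3]
    linear_combination (-1) * ht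
  · rw [← sub_eq_zero]
    apply eq_zero_of_dt_self
    simp only [dt_sub_left, dt_sub_right, dt_smul_left, dt_smul_right]
    rw [dt_comm e3 e2, dt_comm e2 d, dt_comm e3 d, nd, ee2, ee3, e23, ed2, ed3]
    linear_combination (-1) * ht

theorem vol_mul_vol (e1 e2 e3 f1 f2 f3 : Fin 3 → ℝ) : vol e1 e2 e3 * vol f1 f2 f3 =
    dt e1 f1 * (dt e2 f2 * dt e3 f3 - dt e2 f3 * dt e3 f2)
      - dt e1 f2 * (dt e2 f1 * dt e3 f3 - dt e2 f3 * dt e3 f1)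
      + dt e1 f3 * (dt e2 f1 * dt e3 f2 - dt e2 f2 * dt e3 f1) := by
  unfold vol dt; ring

theorem bessel {e1 e2 e3 : Fin 3 → ℝ} (h11 : dt e1 e1 = 1) (h22 : dt e2 e2 = 1)
    (h33 : dt e3 e3 = 1) (h12 : dt e1 e2 = 0) (h13 : dt e1 e3 = 0) (h23 : dt e2 e3 = 0)
    (f : Fin 3 → ℝ) : dt e1 f ^ 2 + dt e2 f ^ 2 + dt e3 f ^ 2 ≤ dt f f := by
  have h := dt_self_nonneg (f - (dt e1 f • e1 + dt e2 f • e2 + dt e3 f • e3))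
  simp only [dt_sub_left, dt_sub_right, dt_add_left, dt_add_right, dt_smul_left, dt_smul_right,
    dt_comm f e1, dt_comm f e2, dt_comm f e3, dt_comm e2 e1, dt_comm e3 e1, dt_comm e3 e2,
    h11, h22, h33, h12, h13, h23] at h
  linarith

/-- The determinant bound near the fcc configuration. -/
theorem fcc_bound {b0 b1 b2 b3 e1 e2 e3 : Fin 3 → ℝ} (hsum : b0 + b1 + b2 + b3 = 0)
    (h11 : dt e1 e1 = 1) (h22 : dt e2 e2 = 1)
    (h33 : dt e3 e3 = 1) (h12 : dt e1 e2 = 0) (h13 : dt e1 e3 = 0) (h23 : dt e2 e3 = 0)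
    (k0 : 2 * τ ^ 2 ≤ dt (τ • e1 + e2) b0) (k2 : 2 * τ ^ 2 ≤ dt (τ • e1 - e2) b2)
    (k1 : 2 * τ ^ 2 ≤ dt (τ • e3 - e1) b1) (k3 : 2 * τ ^ 2 ≤ dt (-(τ • e3) - e1) b3)
    (kc : 2 * τ ^ 2 ≤ dt (τ • e2 + e3) (b0 + b1)) (kd : 2 * τ ^ 2 ≤ dt (e3 - τ • e2) (b1 + b2))
    (n0 : dt b0 b0 < 9.138) (n1 : dt b1 b1 < 9.138) (n2 : dt b2 b2 < 9.138)
    (n3 : dt b3 b3 < 9.138) (nc : dt (b0 + b1) (b0 + b1) < 9.138)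
    (nd : dt (b1 + b2) (b1 + b2) < 9.138) : 256 ≤ vol b0 b1 b2 ^ 2 := by
  obtain ⟨f1, hf1⟩ : ∃ f, f = (1 / 2 : ℝ) • (b0 + b2) := ⟨_, rfl⟩
  obtain ⟨f2, hf2⟩ : ∃ f, f = (1 / 2 : ℝ) • (b0 - b2) := ⟨_, rfl⟩
  obtain ⟨f3, hf3⟩ : ∃ f, f = (1 / 2 : ℝ) • (b1 - b3) := ⟨_, rfl⟩
  have g0 : b0 = f1 + f2 := by rw [hf1, hf2]; module
  have g2 : b2 = f1 - f2 := by rw [hf1, hf2]; module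
  have g1 : b1 = f3 - f1 := by
    rw [hf1, hf3]; linear_combination (norm := module) (1 / 2 : ℝ) • hsum
  have g3 : b3 = -f3 - f1 := by
    rw [hf1, hf3]; linear_combination (norm := module) (1 / 2 : ℝ) • hsum
  have gc : b0 + b1 = f2 + f3 := by rw [g0, g1]; abel
  have gd : b1 + b2 = f3 - f2 := by rw [g2, g1]; abel
  have hv : vol e1 e2 e3 ^ 2 = 1 := by
    rw [vol_sq, h11, h22, h33, h12, h13, h23]; ring
  have hvb : vol b0 b1 b2 = 2 * vol f1 f2 f3 := by
    rw [g0, g1, g2]; simp only [vol, Pi.add_apply, Pi.sub_apply]; ring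
  rw [gc] at kc nc
  rw [gd] at kd nd
  rw [g0] at k0 n0
  rw [g1] at k1 n1
  rw [g2] at k2 n2
  rw [g3] at k3 n3
  have B1 := bessel h11 h22 h33 h12 h13 h23 f1
  have B2 := bessel h11 h22 h33 h12 h13 h23 f2
  have B3 := bessel h11 h22 h33 h12 h13 h23 f3
  simp only [dt_add_self, dt_sub_self, dt_neg_left, dt_neg_right] at n0 n1 n2 n3 nc nd
  rw [dt_comm f3 f2] at nd
  simp only [dt_add_left, dt_sub_left, dt_neg_left, dt_smul_left, dt_add_right, dt_sub_right,
    dt_neg_right] at k0 k1 k2 k3 kc kd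
  have X : 8 ≤ vol e1 e2 e3 * vol f1 f2 f3 := by
    rw [vol_mul_vol]
    apply final_ineq
    · rw [abs_le]; constructor <;> linarith
    · rw [abs_le]; constructor <;> linarith
    · rw [abs_le]; constructor <;> linarith
    · linarith
    · linarith
    · linarith
  calc (256 : ℝ) = 4 * 8 ^ 2 := by norm_num
    _ ≤ 4 * (vol e1 e2 e3 * vol f1 f2 f3) ^ 2 := by gcongr
    _ = vol b0 b1 b2 ^ 2 := by rw [hvb, mul_pow, hv]; ring

theorem SB.good' {b0 b1 b2 b3 : Fin 3 → ℝ} (h : SB b0 b1 b2 b3) (n0 n1 n2 n3 : ℤ)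
    (hn : ¬(n0 = n1 ∧ n1 = n2 ∧ n2 = n3)) {x : Fin 3 → ℝ}
    (hx : x = (n0 : ℝ) • b0 + (n1 : ℝ) • b1 + (n2 : ℝ) • b2 + (n3 : ℝ) • b3) : Good x := by
  rw [hx]; exact h.good n0 n1 n2 n3 hn

/-- The determinant bound when all `bᵢ` are short, `aᵢ` being the axis of a cap containing `bᵢ`, and
the axes of `b₀` and `b₂` form an acute angle. -/
theorem SB.of_caps {b0 b1 b2 b3 a0 a1 a2 a3 : Fin 3 → ℝ} (h : SB b0 b1 b2 b3)
    (x0 : IsAx a0) (x1 : IsAx a1) (x2 : IsAx a2) (x3 : IsAx a3)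
    (k0 : 2 * τ ^ 2 ≤ dt a0 b0) (k1 : 2 * τ ^ 2 ≤ dt a1 b1) (k2 : 2 * τ ^ 2 ≤ dt a2 b2)
    (k3 : 2 * τ ^ 2 ≤ dt a3 b3)
    (n0 : dt b0 b0 < 9.138) (n1 : dt b1 b1 < 9.138) (n2 : dt b2 b2 < 9.138)
    (n3 : dt b3 b3 < 9.138) (h02 : dt a0 a2 = τ) : 256 ≤ vol b0 b1 b2 ^ 2 := by
  have t1 := tau_gt
  have t2 := tau_lt
  have t3 := tau_sq
  have E3 := h.eq3
  have p13 : dt a1 a3 = τ ∨ dt a1 a3 = -τ := cap_pair x1 x3 k1 k3 n1 n3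
    (h.good' 0 1 0 (-1) (by omega) (by push_cast; module))
    (h.good' 0 1 0 1 (by omega) (by push_cast; module))
  have q1 := edge_pos x0 x2 h02 k0 k2
  have q2 : 16 ≤ dt b1 b1 + dt b3 b3 - 2 * (2 * τ - 3) * dt b1 b3 := by
    rcases p13 with p | p
    · have := edge_pos x1 x3 p k1 k3
      have : 0 ≤ (2 * τ - 3) * (-dt b1 b3) := mul_nonneg (by linarith) (by linarith [h.o13])
      linarith
    · exact edge_neg x1 x3 p k1 k3
  rcases le_or_gt 9.138 (dt (b0 + b1) (b0 + b1)) with l | nc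
  · exact h.long_add l q1 q2
  rcases le_or_gt 9.138 (dt (b0 + b3) (b0 + b3)) with l | nd'
  · have h' : SB b0 b3 b2 b1 := h.swap23.swap12.swap23
    have := h'.long_add l q1 (by rw [dt_comm b3 b1]; linarith)
    have e : vol b0 b3 b2 = -vol b0 b1 b2 := by
      rw [vol_swap12, ← h.swap12.vol_swap23, vol_swap12]
    rwa [e, neg_sq] at this
  have E4 : b2 + b3 = -(b0 + b1) := by rw [E3]; abel
  have E5 : b1 + b2 = -(b0 + b3) := by rw [E3]; abel
  have E6 : b3 + b0 = b0 + b3 := add_comm _ _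
  have nd : dt (b1 + b2) (b1 + b2) < 9.138 := by
    rw [E5, dt_neg_left, dt_neg_right, neg_neg]; exact nd'
  -- the caps of the short vectors `b₀ + b₁` and `b₁ + b₂`
  obtain ⟨c, xc, kc⟩ : ∃ a, IsAx a ∧ 2 * τ ^ 2 ≤ dt a (b0 + b1) :=
    h.good_add.resolve_left (not_le.2 nc)
  obtain ⟨d, xd, kd⟩ : ∃ a, IsAx a ∧ 2 * τ ^ 2 ≤ dt a (b1 + b2) :=
    h.rot.good_add.resolve_left (not_le.2 nd)
  have flip : ∀ {a v : Fin 3 → ℝ}, 2 * τ ^ 2 ≤ dt a v → 2 * τ ^ 2 ≤ dt (-a) (-v) := by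
    intro a v hav; rwa [dt_neg_left, dt_neg_right, neg_neg]
  have nflip : ∀ {v : Fin 3 → ℝ}, dt v v < 9.138 → dt (-v) (-v) < 9.138 := by
    intro v hv; rwa [dt_neg_left, dt_neg_right, neg_neg]
  have h01 : dt a0 a1 = -τ := cap_hex x0 x1 k0 k1 n0 n1 nc
    (h.good' 1 (-1) 0 0 (by omega) (by push_cast; module))
    (h.good' 1 1 0 0 (by omega) (by push_cast; module))
  have h12 : dt a1 a2 = -τ := cap_hex x1 x2 k1 k2 n1 n2 nd
    (h.good' 0 1 (-1) 0 (by omega) (by push_cast; module))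
    (h.good' 0 1 1 0 (by omega) (by push_cast; module))
  have h23 : dt a2 a3 = -τ := cap_hex x2 x3 k2 k3 n2 n3 (by rw [E4]; exact nflip nc)
    (h.good' 0 0 1 (-1) (by omega) (by push_cast; module))
    (h.good' 0 0 1 1 (by omega) (by push_cast; module))
  have h30 : dt a3 a0 = -τ := cap_hex x3 x0 k3 k0 n3 n0 (by rw [E6]; exact nd')
    (h.good' (-1) 0 0 1 (by omega) (by push_cast; module))
    (h.good' 1 0 0 1 (by omega) (by push_cast; module))
  have c0 : dt (-c) a0 = -τ := cap_hex xc.neg x0 (flip kc) k0 (nflip nc) n0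
    (by rw [show -(b0 + b1) + b0 = -b1 by abel]; exact nflip n1)
    (h.good' (-2) (-1) 0 0 (by omega) (by push_cast; module))
    (h.good' 0 (-1) 0 0 (by omega) (by push_cast; module))
  have c1 : dt (-c) a1 = -τ := cap_hex xc.neg x1 (flip kc) k1 (nflip nc) n1
    (by rw [show -(b0 + b1) + b1 = -b0 by abel]; exact nflip n0)
    (h.good' (-1) (-2) 0 0 (by omega) (by push_cast; module))
    (h.good' (-1) 0 0 0 (by omega) (by push_cast; module))
  have c2 : dt c a2 = -τ := cap_hex xc x2 kc k2 nc n2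
    (by rw [show b0 + b1 + b2 = -b3 by rw [E3]; abel]; exact nflip n3)
    (h.good' 1 1 (-1) 0 (by omega) (by push_cast; module))
    (h.good' 1 1 1 0 (by omega) (by push_cast; module))
  have c3 : dt c a3 = -τ := cap_hex xc x3 kc k3 nc n3
    (by rw [show b0 + b1 + b3 = -b2 by rw [E3]; abel]; exact nflip n2)
    (h.good' 1 1 0 (-1) (by omega) (by push_cast; module))
    (h.good' 1 1 0 1 (by omega) (by push_cast; module))
  have d1 : dt (-d) a1 = -τ := cap_hex xd.neg x1 (flip kd) k1 (nflip nd) n1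
    (by rw [show -(b1 + b2) + b1 = -b2 by abel]; exact nflip n2)
    (h.good' 0 (-2) (-1) 0 (by omega) (by push_cast; module))
    (h.good' 0 0 (-1) 0 (by omega) (by push_cast; module))
  have d2 : dt (-d) a2 = -τ := cap_hex xd.neg x2 (flip kd) k2 (nflip nd) n2
    (by rw [show -(b1 + b2) + b2 = -b1 by abel]; exact nflip n1)
    (h.good' 0 (-1) (-2) 0 (by omega) (by push_cast; module))
    (h.good' 0 (-1) 0 0 (by omega) (by push_cast; module))
  have d0 : dt d a0 = -τ := cap_hex xd x0 kd k0 nd n0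
    (by rw [show b1 + b2 + b0 = -b3 by rw [E3]; abel]; exact nflip n3)
    (h.good' (-1) 1 1 0 (by omega) (by push_cast; module))
    (h.good' 1 1 1 0 (by omega) (by push_cast; module))
  have d3 : dt d a3 = -τ := cap_hex xd x3 kd k3 nd n3
    (by rw [show b1 + b2 + b3 = -b0 by rw [E3]; abel]; exact nflip n0)
    (h.good' 0 1 1 (-1) (by omega) (by push_cast; module))
    (h.good' 0 1 1 1 (by omega) (by push_cast; module))
  rw [dt_neg_left, neg_inj] at c0 c1 d1 d2
  have h13 : dt a1 a3 = -τ := by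
    refine p13.resolve_left fun p => ?_
    -- the vector `a₀ + a₁ - a₂ - a₃` would be too short for its inner product with `c`
    have hc := dt_cauchy c (a0 + a1 - a2 - a3)
    have h1 : dt c (a0 + a1 - a2 - a3) = 4 * τ := by
      simp only [dt_sub_right, dt_add_right, c0, c1, c2, c3]; ring
    have h2 : dt (a0 + a1 - a2 - a3) (a0 + a1 - a2 - a3) = 8 := by
      simp only [dt_sub_right, dt_add_right, dt_sub_left, dt_add_left, x0.self, x1.self, x2.self,
        x3.self, h01, h02, h12, h23, h30, p, dt_comm a1 a0, dt_comm a2 a0, dt_comm a0 a3,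
        dt_comm a2 a1, dt_comm a3 a1, dt_comm a3 a2]
      ring
    rw [h1, h2, xc.self] at hc
    nlinarith
  obtain ⟨e1, e2, e3, ⟨h11, h22, h33⟩, ⟨o12, o13, o23⟩, rfl, rfl, rfl, rfl, rfl, rfl⟩ :=
    frame x0.self x1.self x2.self x3.self xc.self xd.self h02 h13 h01 h12 h23 h30 c0 c1 c2 c3
      d0 d1 d2 d3
  exact fcc_bound h.sum h11 h22 h33 o12 o13 o23 k0 k2 k1 k3 kc kd n0 n1 n2 n3 nc nd

/-- The determinant bound for obtuse superbases. -/
theorem SB.bound {b0 b1 b2 b3 : Fin 3 → ℝ} (h : SB b0 b1 b2 b3) : 256 ≤ vol b0 b1 b2 ^ 2 := by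
  have r1 : vol b0 b1 b2 ^ 2 = vol b1 b2 b3 ^ 2 := by rw [h.vol_rot, neg_sq]
  have r2 : vol b0 b1 b2 ^ 2 = vol b2 b3 b0 ^ 2 := by rw [r1, h.rot.vol_rot, neg_sq]
  have r3 : vol b0 b1 b2 ^ 2 = vol b3 b0 b1 ^ 2 := by rw [r2, h.rot.rot.vol_rot, neg_sq]
  rcases le_or_gt 9.138 (dt b0 b0) with l | n0
  · exact h.long0 l
  rcases le_or_gt 9.138 (dt b1 b1) with l | n1
  · rw [r1]; exact h.rot.long0 l
  rcases le_or_gt 9.138 (dt b2 b2) with l | n2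
  · rw [r2]; exact h.rot.rot.long0 l
  rcases le_or_gt 9.138 (dt b3 b3) with l | n3
  · rw [r3]; exact h.rot.rot.rot.long0 l
  obtain ⟨a0, x0, k0⟩ := h.good0.resolve_left (not_le.2 n0)
  obtain ⟨a1, x1, k1⟩ := h.rot.good0.resolve_left (not_le.2 n1)
  obtain ⟨a2, x2, k2⟩ := h.rot.rot.good0.resolve_left (not_le.2 n2)
  obtain ⟨a3, x3, k3⟩ := h.rot.rot.rot.good0.resolve_left (not_le.2 n3)
  rcases cap_pair x0 x2 k0 k2 n0 n2 (h.good' 1 0 (-1) 0 (by omega) (by push_cast; module))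
    (h.good' 1 0 1 0 (by omega) (by push_cast; module)) with p02 | p02
  · exact h.of_caps x0 x1 x2 x3 k0 k1 k2 k3 n0 n1 n2 n3 p02
  rcases cap_pair x0 x1 k0 k1 n0 n1 (h.good' 1 (-1) 0 0 (by omega) (by push_cast; module))
    (h.good' 1 1 0 0 (by omega) (by push_cast; module)) with p01 | p01
  · rw [vol_swap12, neg_sq]
    exact h.swap12.of_caps x0 x2 x1 x3 k0 k2 k1 k3 n0 n2 n1 n3 p01
  rcases cap_pair x0 x3 k0 k3 n0 n3 (h.good' 1 0 0 (-1) (by omega) (by push_cast; module))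
    (h.good' 1 0 0 1 (by omega) (by push_cast; module)) with p03 | p03
  · rw [h.vol_swap23, neg_sq]
    exact h.swap23.of_caps x0 x1 x3 x2 k0 k1 k3 k2 n0 n1 n3 n2 p03
  rcases cap_pair x1 x2 k1 k2 n1 n2 (h.good' 0 1 (-1) 0 (by omega) (by push_cast; module))
    (h.good' 0 1 1 0 (by omega) (by push_cast; module)) with p12 | p12
  · rw [vol_swap01, neg_sq]
    exact h.swap01.of_caps x1 x0 x2 x3 k1 k0 k2 k3 n1 n0 n2 n3 p12
  rcases cap_pair x1 x3 k1 k3 n1 n3 (h.good' 0 1 0 (-1) (by omega) (by push_cast; module))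
    (h.good' 0 1 0 1 (by omega) (by push_cast; module)) with p13 | p13
  · rw [r1]
    exact h.rot.of_caps x1 x2 x3 x0 k1 k2 k3 k0 n1 n2 n3 n0 p13
  rcases cap_pair x2 x3 k2 k3 n2 n3 (h.good' 0 0 1 (-1) (by omega) (by push_cast; module))
    (h.good' 0 0 1 1 (by omega) (by push_cast; module)) with p23 | p23
  · rw [r2, vol_swap12, neg_sq]
    exact h.rot.rot.swap12.of_caps x2 x0 x3 x1 k2 k0 k3 k1 n2 n0 n3 n1 p23
  -- four vectors of squared norm `τ + 2` cannot be pairwise that obtuse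
  exfalso
  have := dt_self_nonneg (a0 + a1 + a2 + a3)
  simp only [dt_add_right, dt_add_left, x0.self, x1.self, x2.self, x3.self, p01, p02, p03, p12,
    p13, p23, dt_comm a1 a0, dt_comm a2 a0, dt_comm a3 a0, dt_comm a2 a1, dt_comm a3 a1,
    dt_comm a3 a2] at this
  linarith [tau_gt]

/-! ### Existence of an obtuse superbase -/

/-- The lattice vector with integer coordinates `z`. -/
def lin (B : Matrix (Fin 3) (Fin 3) ℝ) (z : Fin 3 → ℤ) : Fin 3 → ℝ := B.mulVec fun i => (z i : ℝ)

/-- The determinant of three integer vectors. -/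
def idet (u v w : Fin 3 → ℤ) : ℤ :=
  u 0 * (v 1 * w 2 - v 2 * w 1) - u 1 * (v 0 * w 2 - v 2 * w 0) + u 2 * (v 0 * w 1 - v 1 * w 0)

section Lin

variable (B : Matrix (Fin 3) (Fin 3) ℝ)

theorem lin_add (x y : Fin 3 → ℤ) : lin B (x + y) = lin B x + lin B y := by
  unfold lin; rw [← Matrix.mulVec_add]; congr 1; ext i; simp

theorem lin_smul (n : ℤ) (x : Fin 3 → ℤ) : lin B (n • x) = (n : ℝ) • lin B x := by
  unfold lin; rw [← Matrix.mulVec_smul]; congr 1; ext i; simp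

theorem lin_neg (x : Fin 3 → ℤ) : lin B (-x) = -lin B x := by
  unfold lin; rw [← Matrix.mulVec_neg]; congr 1; ext i; simp

theorem vol_lin (x y z : Fin 3 → ℤ) :
    vol (lin B x) (lin B y) (lin B z) = B.det * (idet x y z : ℝ) := by
  simp only [vol, lin, idet, Matrix.mulVec, dotProduct, Fin.sum_univ_three, Matrix.det_fin_three]
  push_cast
  ring

theorem coord_bound {B : Matrix (Fin 3) (Fin 3) ℝ} (hB : IsUnit B.det) (R : ℝ) :
    ∃ N : ℤ, ∀ z : Fin 3 → ℤ, dt (lin B z) (lin B z) ≤ R → ∀ i, |z i| ≤ N := by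
  refine ⟨⌈(∑ i, ∑ j, |B⁻¹ i j|) * (R + 1)⌉, fun z hz i => ?_⟩
  have h1 : (fun i => (z i : ℝ)) = B⁻¹.mulVec (lin B z) := by
    unfold lin
    rw [Matrix.mulVec_mulVec, Matrix.nonsing_inv_mul _ hB, Matrix.one_mulVec]
  have h2 : ∀ j, |lin B z j| ≤ R + 1 := by
    intro j
    have h0 : lin B z j ^ 2 ≤ R := by
      unfold dt at hz
      fin_cases j <;> simp <;>
      nlinarith [mul_self_nonneg (lin B z 0), mul_self_nonneg (lin B z 1),
        mul_self_nonneg (lin B z 2)]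
    have hR : 0 ≤ R := (sq_nonneg _).trans h0
    exact abs_le_of_sq_le_sq (by nlinarith) (by linarith)
  have hR : 0 ≤ R + 1 := (abs_nonneg _).trans (h2 0)
  have h3 : |(z i : ℝ)| ≤ (∑ i, ∑ j, |B⁻¹ i j|) * (R + 1) := by
    calc |(z i : ℝ)| = |∑ j, B⁻¹ i j * lin B z j| := by
          rw [show (z i : ℝ) = (B⁻¹.mulVec (lin B z)) i from congrFun h1 i]; rfl
      _ ≤ ∑ j, |B⁻¹ i j * lin B z j| := Finset.abs_sum_le_sum_abs _ _
      _ ≤ ∑ j, |B⁻¹ i j| * (R + 1) := by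
          gcongr with j
          rw [abs_mul]
          gcongr
          exact h2 j
      _ = (∑ j, |B⁻¹ i j|) * (R + 1) := by rw [Finset.sum_mul]
      _ ≤ (∑ i, ∑ j, |B⁻¹ i j|) * (R + 1) := by
          refine mul_le_mul_of_nonneg_right ?_ hR
          exact Finset.single_le_sum (f := fun i => ∑ j, |B⁻¹ i j|)
            (fun i _ => Finset.sum_nonneg fun j _ => abs_nonneg _) (Finset.mem_univ i)
  have h4 := h3.trans (Int.le_ceil _)
  exact_mod_cast h4

theorem finite_short {B : Matrix (Fin 3) (Fin 3) ℝ} (hB : IsUnit B.det) (R : ℝ) :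
    {z : Fin 3 → ℤ | dt (lin B z) (lin B z) ≤ R}.Finite := by
  obtain ⟨N, hN⟩ := coord_bound hB R
  refine (Set.finite_Icc (fun _ => -N) (fun _ => N)).subset fun z hz => ⟨fun i => ?_, fun i => ?_⟩
  · exact (abs_le.1 (hN z hz i)).1
  · exact (abs_le.1 (hN z hz i)).2

theorem lin_eq_zero {B : Matrix (Fin 3) (Fin 3) ℝ} (hB : IsUnit B.det) {z : Fin 3 → ℤ}
    (h : lin B z = 0) : z = 0 := by
  have h1 : (fun i => (z i : ℝ)) = 0 := by
    have := congrArg B⁻¹.mulVec h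
    unfold lin at this
    rwa [Matrix.mulVec_mulVec, Matrix.nonsing_inv_mul _ hB, Matrix.one_mulVec,
      Matrix.mulVec_zero] at this
  ext i
  simpa using congrFun h1 i

/-- Selling's functional: the sum of the squared lengths of the superbase spanned by `x, y, z`. -/
def sell (x y z : Fin 3 → ℤ) : ℝ :=
  dt (lin B x) (lin B x) + dt (lin B y) (lin B y) + dt (lin B z) (lin B z) +
    dt (lin B (x + y + z)) (lin B (x + y + z))

/-- A basis `x, y, z` of `ℤ³` minimising Selling's functional. -/
def SellMin (x y z : Fin 3 → ℤ) : Prop :=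
  idet x y z ^ 2 = 1 ∧ ∀ x' y' z', idet x' y' z' ^ 2 = 1 → sell B x y z ≤ sell B x' y' z'

variable {B}

theorem exists_sellMin (hB : IsUnit B.det) : ∃ x y z, SellMin B x y z := by
  set R := sell B ![1, 0, 0] ![0, 1, 0] ![0, 0, 1] with hR
  set T : Set ((Fin 3 → ℤ) × (Fin 3 → ℤ) × (Fin 3 → ℤ)) :=
    {t | idet t.1 t.2.1 t.2.2 ^ 2 = 1 ∧ sell B t.1 t.2.1 t.2.2 ≤ R} with hT
  have hfin : T.Finite := by
    have hs := finite_short hB R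
    refine (hs.prod (hs.prod hs)).subset ?_
    rintro ⟨x, y, z⟩ ⟨-, h⟩
    simp only [sell] at h
    have h1 := dt_self_nonneg (lin B x)
    have h2 := dt_self_nonneg (lin B y)
    have h3 := dt_self_nonneg (lin B z)
    have h4 := dt_self_nonneg (lin B (x + y + z))
    refine ⟨?_, ?_, ?_⟩ <;> simp only [Set.mem_ofPred_eq] <;> linarith
  have hne : T.Nonempty := ⟨(![1, 0, 0], ![0, 1, 0], ![0, 0, 1]), by simp [idet], le_rfl⟩
  obtain ⟨⟨x, y, z⟩, ⟨h1, h2⟩, h3⟩ :=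
    Set.exists_min_image T (fun t => sell B t.1 t.2.1 t.2.2) hfin hne
  refine ⟨x, y, z, h1, fun x' y' z' h' => ?_⟩
  rcases le_total (sell B x' y' z') R with hle | hle
  · exact h3 (x', y', z') ⟨h', hle⟩
  · exact h2.trans hle

theorem SellMin.rot {x y z : Fin 3 → ℤ} (h : SellMin B x y z) : SellMin B y z x := by
  refine ⟨?_, fun x' y' z' h' => ?_⟩
  · rw [← h.1]; unfold idet; ring
  · refine le_trans (le_of_eq ?_) (h.2 x' y' z' h')
    unfold sell
    rw [show y + z + x = x + y + z by abel]
    ring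

theorem SellMin.swap {x y z : Fin 3 → ℤ} (h : SellMin B x y z) :
    SellMin B x (-(x + y + z)) y := by
  refine ⟨?_, fun x' y' z' h' => ?_⟩
  · rw [← h.1]; simp only [idet, Pi.neg_apply, Pi.add_apply]; ring
  · refine le_trans (le_of_eq ?_) (h.2 x' y' z' h')
    unfold sell
    rw [show x + -(x + y + z) + y = -z by abel, lin_neg, lin_neg]
    simp only [dt_neg_left, dt_neg_right]
    ring

/-- Replacing the basis `x, y, z` by `-x, y, x + z` changes Selling's functional by a positive
multiple of `-(x · y)`, which must not be negative at a minimum. -/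
theorem SellMin.obtuse {x y z : Fin 3 → ℤ} (h : SellMin B x y z) :
    dt (lin B x) (lin B y) ≤ 0 := by
  have h1 := h.2 (-x) y (x + z) (by
    rw [← h.1]; simp only [idet, Pi.neg_apply, Pi.add_apply]; ring)
  unfold sell at h1
  rw [show -x + y + (x + z) = y + z by abel] at h1
  simp only [lin_neg, lin_add, dt_neg_left, dt_neg_right, dt_add_left, dt_add_right,
    dt_comm (lin B y) (lin B x), dt_comm (lin B z) (lin B x), dt_comm (lin B z) (lin B y)] at h1
  linarith

/-- The determinant bound: a lattice whose nonzero vectors are all `Good` has determinant at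
least `16`. -/
theorem det_bound (hB : IsUnit B.det) (hg : ∀ z : Fin 3 → ℤ, z ≠ 0 → Good (lin B z)) :
    256 ≤ B.det ^ 2 := by
  obtain ⟨x, y, z, h⟩ := exists_sellMin hB
  have hs : SB (lin B x) (lin B y) (lin B z) (lin B (-(x + y + z))) := by
    have e1 : -(x + y + z) = -(y + z + x) := by abel
    have e2 : -(x + y + z) = -(z + x + y) := by abel
    refine ⟨?_, ?_, h.obtuse, ?_, h.swap.obtuse, h.rot.obtuse, ?_, ?_⟩
    · rw [lin_neg, lin_add, lin_add]; abel
    · intro n0 n1 n2 n3 hn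
      have e : (n0 : ℝ) • lin B x + (n1 : ℝ) • lin B y + (n2 : ℝ) • lin B z +
          (n3 : ℝ) • lin B (-(x + y + z)) =
          lin B ((n0 - n3) • x + (n1 - n3) • y + (n2 - n3) • z) := by
        simp only [lin_neg, lin_add, lin_smul]
        push_cast
        module
      rw [e]
      refine hg _ fun h0 => hn ?_
      have c0 := congrFun h0 0
      have c1 := congrFun h0 1
      have c2 := congrFun h0 2
      simp only [Pi.add_apply, Pi.smul_apply, smul_eq_mul, Pi.zero_apply] at c0 c1 c2
      have hd := h.1
      -- Cramer's rule
      have k0 : (n0 - n3) * idet x y z ^ 2 = 0 := by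
        linear_combination (norm := (unfold idet; ring)) (idet x y z) * ((y 1 * z 2 - y 2 * z 1) * c0
          - (y 0 * z 2 - y 2 * z 0) * c1 + (y 0 * z 1 - y 1 * z 0) * c2)
      have k1 : (n1 - n3) * idet x y z ^ 2 = 0 := by
        linear_combination (norm := (unfold idet; ring)) (idet x y z) * ((z 1 * x 2 - z 2 * x 1) * c0
          - (z 0 * x 2 - z 2 * x 0) * c1 + (z 0 * x 1 - z 1 * x 0) * c2)
      have k2 : (n2 - n3) * idet x y z ^ 2 = 0 := by
        linear_combination (norm := (unfold idet; ring)) (idet x y z) * ((x 1 * y 2 - x 2 * y 1) * c0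
          - (x 0 * y 2 - x 2 * y 0) * c1 + (x 0 * y 1 - x 1 * y 0) * c2)
      rw [hd] at k0 k1 k2
      omega
    · rw [dt_comm]; exact h.rot.rot.obtuse
    · rw [e1]; exact h.rot.swap.obtuse
    · rw [e2]; exact h.rot.rot.swap.obtuse
  have hb := hs.bound
  have h1 : (idet x y z : ℝ) ^ 2 = 1 := by exact_mod_cast h.1
  rwa [vol_lin, mul_pow, h1, mul_one] at hb

end Lin

/-! ### Packing lattices and the facets of the body -/

/-- The points satisfying all facet inequalities of the icosidodecahedron strictly. -/
def strictBody : Set (Fin 3 → ℝ) :=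
  {x | (|x 0| + |x 1| + |x 2| < 1 ∧ |τ * x 0| + |x 2 / τ| < 1 ∧
       |τ * x 1| + |x 0 / τ| < 1 ∧ |τ * x 2| + |x 1 / τ| < 1) ∧
       (|τ * x 0| + |x 1| < 1 ∧ |τ * x 1| + |x 2| < 1 ∧ |τ * x 2| + |x 0| < 1)}

theorem isOpen_strictBody : IsOpen strictBody := by
  have h2 : ∀ i j, IsOpen {x : Fin 3 → ℝ | |τ * x i| + |x j / τ| < 1} := fun i j =>
    isOpen_lt (by fun_prop) continuous_const
  have h3 : ∀ i j, IsOpen {x : Fin 3 → ℝ | |τ * x i| + |x j| < 1} := fun i j =>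
    isOpen_lt (by fun_prop) continuous_const
  have h1 : IsOpen {x : Fin 3 → ℝ | |x 0| + |x 1| + |x 2| < 1} :=
    isOpen_lt (by fun_prop) continuous_const
  exact (h1.inter ((h2 0 2).inter ((h2 1 0).inter (h2 2 1)))).inter
    ((h3 0 1).inter ((h3 1 2).inter (h3 2 0)))

theorem strictBody_subset : strictBody ⊆ icosidodeca := by
  rintro x ⟨⟨h1, h2, h3, h4⟩, h5, h6, h7⟩
  exact ⟨⟨h1.le, h2.le, h3.le, h4.le⟩, h5.le, h6.le, h7.le⟩

theorem strictBody_neg {x : Fin 3 → ℝ} (h : x ∈ strictBody) : -x ∈ strictBody := by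
  simpa [strictBody, neg_div] using h

theorem abs_add_abs_lt {x y c : ℝ} (h : ∀ ε δ : ℝ, (ε = 1 ∨ ε = -1) → (δ = 1 ∨ δ = -1) →
    ε * x + δ * y < c) : |x| + |y| < c := by
  have h1 := h 1 1 (by simp) (by simp)
  have h2 := h 1 (-1) (by simp) (by simp)
  have h3 := h (-1) 1 (by simp) (by simp)
  have h4 := h (-1) (-1) (by simp) (by simp)
  rcases abs_cases x with ⟨h, _⟩ | ⟨h, _⟩ <;> rcases abs_cases y with ⟨h', _⟩ | ⟨h', _⟩ <;>
  rw [h, h'] <;> linarith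

/-- Short vectors satisfy the inequalities of the triangular facets, so that only the pentagonal
facets have to be tested. -/
theorem mem_strictBody {x : Fin 3 → ℝ} (hx : dt x x < 1 / 3) (ha : ∀ a, IsAx a → dt a x < 1) :
    x ∈ strictBody := by
  have ht := tau_sq
  have h0 := tau_pos
  have hinv : 1 / τ = τ - 1 := by
    rw [div_eq_iff h0.ne']; linarith
  unfold dt at hx
  have tri : ∀ u v : ℝ, u ^ 2 + v ^ 2 < 1 / 3 → |τ * u| + |v / τ| < 1 := by
    intro u v huv
    have e : |τ * u| + |v / τ| = τ * |u| + (τ - 1) * |v| := by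
      rw [abs_mul, abs_div, abs_of_pos h0, ← hinv]; ring
    rw [e]
    have hsq : (τ * |u| + (τ - 1) * |v|) ^ 2 + ((τ - 1) * |u| - τ * |v|) ^ 2
        = 3 * (u ^ 2 + v ^ 2) := by
      linear_combination (2 * |u| ^ 2 + 2 * |v| ^ 2) * ht + 3 * sq_abs u + 3 * sq_abs v
    nlinarith [sq_nonneg ((τ - 1) * |u| - τ * |v|)]
  refine ⟨⟨?_, ?_, ?_, ?_⟩, ?_, ?_, ?_⟩
  · have e0 := sq_abs (x 0)
    have e1 := sq_abs (x 1)
    have e2 := sq_abs (x 2)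
    nlinarith [sq_nonneg (|x 0| - |x 1|), sq_nonneg (|x 0| - |x 2|), sq_nonneg (|x 1| - |x 2|)]
  · exact tri _ _ (by nlinarith [mul_self_nonneg (x 1)])
  · exact tri _ _ (by nlinarith [mul_self_nonneg (x 2)])
  · exact tri _ _ (by nlinarith [mul_self_nonneg (x 0)])
  · refine abs_add_abs_lt fun ε δ he hd => ?_
    have := ha ![ε * τ, δ, 0] ⟨ε, δ, he, hd, Or.inl rfl⟩
    simp [dt] at this; linarith
  · refine abs_add_abs_lt fun ε δ he hd => ?_
    have := ha ![0, ε * τ, δ] ⟨ε, δ, he, hd, Or.inr (Or.inl rfl)⟩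
    simp [dt] at this; linarith
  · refine abs_add_abs_lt fun ε δ he hd => ?_
    have := ha ![δ, 0, ε * τ] ⟨ε, δ, he, hd, Or.inr (Or.inr rfl)⟩
    simp [dt] at this; linarith

theorem mem_interior_translate {c : ℝ} (hc : 0 < c) {v m : Fin 3 → ℝ}
    (h : c⁻¹ • (m - v) ∈ strictBody) : m ∈ interior ((v + ·) '' (c • icosidodeca)) := by
  have hopen : IsOpen {y : Fin 3 → ℝ | c⁻¹ • (y - v) ∈ strictBody} :=
    isOpen_strictBody.preimage (by fun_prop)
  refine interior_maximal ?_ hopen h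
  intro y hy
  refine ⟨y - v, ?_, by simp⟩
  exact (Set.mem_smul_set_iff_inv_smul_mem₀ hc.ne' _ _).2 (strictBody_subset hy)

/-- The nonzero vectors of a packing lattice, scaled to the body `τ²·P`, are `Good`: otherwise
half the vector is interior to two translates. -/
theorem good_of_packing {c : ℝ} (hc : 0 < c) {B : Matrix (Fin 3) (Fin 3) ℝ} (hB : IsUnit B.det)
    (hp : IsPackingLattice (c • icosidodeca) (latticeOf B)) {z : Fin 3 → ℤ} (hz : z ≠ 0) :
    Good (lin ((τ ^ 2 / c) • B) z) := by
  by_contra hbad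
  unfold Good at hbad
  push Not at hbad
  obtain ⟨h1, h2⟩ := hbad
  have ht := tau_sq
  have h0 := tau_pos
  have hl : lin ((τ ^ 2 / c) • B) z = (τ ^ 2 / c) • lin B z := by
    unfold lin; rw [Matrix.smul_mulVec]
  rw [hl] at h1 h2
  set v := lin B z with hv
  have hmem : c⁻¹ • ((1 / 2 : ℝ) • v) ∈ strictBody := by
    have e : c⁻¹ • ((1 / 2 : ℝ) • v) = (1 / (2 * τ ^ 2)) • ((τ ^ 2 / c) • v) := by
      rw [smul_smul, smul_smul]; congr 1; field_simp
    rw [e]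
    apply mem_strictBody
    · rw [dt_smul_left, dt_smul_right]
      have h4 : 4 * τ ^ 4 = 12 * τ + 8 := by linear_combination (4 * τ ^ 2 + 4 * τ + 8) * ht
      have h5 : 9.138 < (4 * τ ^ 4) / 3 := by rw [h4]; linarith [tau_gt]
      rw [← mul_assoc, ← pow_two, div_pow, one_pow, mul_pow, ← pow_mul, one_div_mul_eq_div,
        div_lt_iff₀ (by positivity)]
      norm_num at h5 ⊢
      linarith
    · intro a ha
      rw [dt_smul_right, one_div_mul_eq_div, div_lt_iff₀ (by positivity), one_mul]
      exact h2 a ha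
  have hne : (0 : Fin 3 → ℝ) ≠ v := fun h => hz (lin_eq_zero hB (by rw [← hv, ← h]))
  have hzero : (0 : Fin 3 → ℝ) ∈ latticeOf B := by
    refine ⟨0, ?_⟩
    symm; convert Matrix.mulVec_zero B using 2; ext i; simp
  have hm1 : (1 / 2 : ℝ) • v ∈ interior ((0 + ·) '' (c • icosidodeca)) :=
    mem_interior_translate hc (by rw [sub_zero]; exact hmem)
  have hm2 : (1 / 2 : ℝ) • v ∈ interior ((v + ·) '' (c • icosidodeca)) := by
    refine mem_interior_translate hc ?_
    have := strictBody_neg hmem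
    rwa [← smul_neg, show -((1 / 2 : ℝ) • v) = (1 / 2 : ℝ) • v - v by module] at this
  exact Set.disjoint_left.1 (hp 0 hzero v ⟨z, rfl⟩ hne) hm1 hm2

theorem packing_det_bound {c : ℝ} (hc : 0 < c) {B : Matrix (Fin 3) (Fin 3) ℝ} (hB : IsUnit B.det)
    (hp : IsPackingLattice (c • icosidodeca) (latticeOf B)) : 16 * c ^ 3 ≤ τ ^ 6 * |B.det| := by
  have h0 := tau_pos
  have hdet : ((τ ^ 2 / c) • B).det = (τ ^ 2 / c) ^ 3 * B.det := by
    rw [Matrix.det_smul]; simp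
  have hk : 0 < (τ ^ 2 / c) ^ 3 := by positivity
  have h1 := det_bound (B := (τ ^ 2 / c) • B)
    (by rw [hdet]; exact (isUnit_iff_ne_zero.2 hk.ne').mul hB)
    (fun z hz => good_of_packing hc hB hp hz)
  have h2 : (16 : ℝ) ≤ |((τ ^ 2 / c) • B).det| := by
    rw [← abs_of_pos (by norm_num : (0 : ℝ) < 16)]
    exact sq_le_sq.1 (by linarith)
  rw [hdet, abs_mul, abs_of_pos hk, div_pow, div_mul_eq_mul_div, le_div_iff₀ (by positivity),
    ← pow_mul] at h2
  exact h2

/-! ### The fcc lattice packing -/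

theorem IsAx.le_one {a x : Fin 3 → ℝ} (ha : IsAx a) (hx : x ∈ icosidodeca) : dt a x ≤ 1 := by
  obtain ⟨-, h1, h2, h3⟩ := hx
  obtain ⟨ε, δ, he, hd, h⟩ := ha
  have key : ∀ u v : ℝ, |u| + |v| ≤ 1 → ε * u + δ * v ≤ 1 := by
    intro u v huv
    have := le_abs_self u
    have := neg_abs_le u
    have := le_abs_self v
    have := neg_abs_le v
    rcases he with rfl | rfl <;> rcases hd with rfl | rfl <;> linarith
  rcases h with rfl | rfl | rfl
  · have := key _ _ h1; simp [dt]; linarith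
  · have := key _ _ h2; simp [dt]; linarith
  · have := key _ _ h3; simp [dt]; linarith

theorem exists_sign (x : ℝ) : ∃ ε : ℝ, (ε = 1 ∨ ε = -1) ∧ ε * x = |x| := by
  rcases abs_cases x with ⟨h, _⟩ | ⟨h, _⟩
  · exact ⟨1, Or.inl rfl, by rw [h, one_mul]⟩
  · exact ⟨-1, Or.inr rfl, by rw [h]; ring⟩

/-- Every nonzero vector of `D₃` lies beyond a pentagonal facet of `τ²·P`. -/
theorem fcc_cap {k : Fin 3 → ℤ} (hk : k ≠ 0) (hs : Even (k 0 + k 1 + k 2)) :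
    ∃ a, IsAx a ∧ τ ^ 2 ≤ dt a fun i => (k i : ℝ) := by
  have ht := tau_sq
  have hg := tau_gt
  have hcases : (2 ≤ |k 0| ∨ (1 ≤ |k 0| ∧ 1 ≤ |k 1|)) ∨ (2 ≤ |k 1| ∨ (1 ≤ |k 1| ∧ 1 ≤ |k 2|)) ∨
      (2 ≤ |k 2| ∨ (1 ≤ |k 2| ∧ 1 ≤ |k 0|)) := by
    have : ¬(k 0 = 0 ∧ k 1 = 0 ∧ k 2 = 0) := by
      rintro ⟨h0, h1, h2⟩
      apply hk
      ext i
      fin_cases i <;> assumption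
    obtain ⟨m, hm⟩ := hs
    grind
  have key : ∀ x y : ℤ, (2 ≤ |x| ∨ (1 ≤ |x| ∧ 1 ≤ |y|)) →
      τ ^ 2 ≤ |(x : ℝ)| * τ + |(y : ℝ)| := by
    intro x y h
    have hy := abs_nonneg (y : ℝ)
    rcases h with h | ⟨h, h'⟩
    · have : (2 : ℝ) ≤ |(x : ℝ)| := by exact_mod_cast h
      nlinarith
    · have h1 : (1 : ℝ) ≤ |(x : ℝ)| := by exact_mod_cast h
      have h2 : (1 : ℝ) ≤ |(y : ℝ)| := by exact_mod_cast h'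
      nlinarith
  rcases hcases with h | h | h
  · obtain ⟨ε, he, he'⟩ := exists_sign (k 0)
    obtain ⟨δ, hd, hd'⟩ := exists_sign (k 1)
    refine ⟨![ε * τ, δ, 0], ⟨ε, δ, he, hd, Or.inl rfl⟩, (key _ _ h).trans_eq ?_⟩
    simp [dt]; rw [← he', ← hd']; ring
  · obtain ⟨ε, he, he'⟩ := exists_sign (k 1)
    obtain ⟨δ, hd, hd'⟩ := exists_sign (k 2)
    refine ⟨![0, ε * τ, δ], ⟨ε, δ, he, hd, Or.inr (Or.inl rfl)⟩, (key _ _ h).trans_eq ?_⟩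
    simp [dt]; rw [← he', ← hd']; ring
  · obtain ⟨ε, he, he'⟩ := exists_sign (k 2)
    obtain ⟨δ, hd, hd'⟩ := exists_sign (k 0)
    refine ⟨![δ, 0, ε * τ], ⟨ε, δ, he, hd, Or.inr (Or.inr rfl)⟩, (key _ _ h).trans_eq ?_⟩
    simp [dt]; rw [← he', ← hd']; ring

theorem IsAx.translate_le {a x w : Fin 3 → ℝ} {c : ℝ} (hc : 0 < c) (ha : IsAx a)
    (hw : w ∈ (x + ·) '' (c • icosidodeca)) : dt a (w - x) ≤ c := by
  obtain ⟨u, ⟨p, hp, rfl⟩, rfl⟩ := hw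
  simp only [add_sub_cancel_left, dt_smul_right]
  nlinarith [ha.le_one hp]

theorem IsAx.translate_lt {a x w : Fin 3 → ℝ} {c : ℝ} (hc : 0 < c) (ha : IsAx a)
    (hw : w ∈ interior ((x + ·) '' (c • icosidodeca))) : dt a (w - x) < c := by
  -- a small step in direction `a` stays in the body and increases the functional
  have hcont : Continuous fun t : ℝ => w + t • a := by fun_prop
  have hnhds : {t : ℝ | w + t • a ∈ interior ((x + ·) '' (c • icosidodeca))} ∈ nhds (0 : ℝ) :=
    (isOpen_interior.preimage hcont).mem_nhds (by simpa using hw)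
  obtain ⟨r, hr, hball⟩ := Metric.mem_nhds_iff.1 hnhds
  have h1 : w + (r / 2) • a ∈ (x + ·) '' (c • icosidodeca) :=
    interior_subset (hball (by simp [abs_of_pos hr, hr]))
  have h2 := ha.translate_le hc h1
  rw [show w + (r / 2) • a - x = (w - x) + (r / 2) • a by abel, dt_add_right, dt_smul_right,
    ha.self] at h2
  nlinarith [tau_pos]

theorem fcc_packing {c : ℝ} (hc : 0 < c) :
    IsPackingLattice (c • icosidodeca) (latticeOf ((2 * c / τ ^ 2) • D3)) := by
  have h0 := tau_pos
  rintro x ⟨z, hz⟩ y ⟨z', hz'⟩ hxy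
  rw [Set.disjoint_left]
  intro w hw hw'
  set k : Fin 3 → ℤ := ![(z' 0 - z 0) + (z' 1 - z 1), (z' 0 - z 0) + (z' 2 - z 2),
    (z' 1 - z 1) + (z' 2 - z 2)] with hk
  have e : y - x = (2 * c / τ ^ 2) • fun i => (k i : ℝ) := by
    rw [hz, hz', Matrix.smul_mulVec, Matrix.smul_mulVec, ← smul_sub, ← Matrix.mulVec_sub]
    congr 1
    ext i
    fin_cases i <;>
    simp [D3, Matrix.mulVec, dotProduct, Fin.sum_univ_three, hk]
  have hk0 : k ≠ 0 := by
    intro h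
    apply hxy
    have : y - x = 0 := by
      rw [e, h]; ext i; simp
    exact (sub_eq_zero.1 this).symm
  have heven : Even (k 0 + k 1 + k 2) :=
    ⟨(z' 0 - z 0) + (z' 1 - z 1) + (z' 2 - z 2), by simp [hk]; ring⟩
  obtain ⟨a, ha, hak⟩ := fcc_cap hk0 heven
  have h1 := ha.translate_lt hc hw
  have h2 := ha.neg.translate_lt hc hw'
  have h3 : dt a (y - x) = dt a (w - x) + dt (-a) (w - y) := by
    rw [dt_neg_left, ← sub_eq_add_neg, ← dt_sub_right]; congr 1; abel
  have h4 : 2 * c ≤ dt a (y - x) := by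
    rw [e, dt_smul_right, div_mul_eq_mul_div, le_div_iff₀ (by positivity)]
    gcongr
  linarith

theorem det_D3 : D3.det = -2 := by
  simp [D3, Matrix.det_fin_three]; norm_num

/-! ### Volumes of simplices and slices -/

theorem volume_preimage_mulVec (A : Matrix (Fin 3) (Fin 3) ℝ) (hA : A.det ≠ 0)
    (S : Set (Fin 3 → ℝ)) :
    volume {x | A.mulVec x ∈ S} = ENNReal.ofReal |A.det|⁻¹ * volume S := by
  have := Measure.addHaar_preimage_linearMap (volume : Measure (Fin 3 → ℝ))
    (f := Matrix.toLin' A) (by rwa [LinearMap.det_toLin']) S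
  rw [LinearMap.det_toLin', abs_inv] at this
  rw [← this]
  rfl

theorem volume_half (i : Fin 3) (S : Set (Fin 3 → ℝ))
    (hS : ∀ x, (fun j => if j = i then -x j else x j) ∈ S ↔ x ∈ S) :
    volume S = 2 * volume (S ∩ {x | 0 ≤ x i}) := by
  have hm : MeasurableSet {x : Fin 3 → ℝ | 0 ≤ x i} := measurableSet_le (by fun_prop) (by fun_prop)
  rw [← measure_inter_add_sdiff S hm, two_mul]
  congr 1
  have h1 : S \ {x | 0 ≤ x i} =
      {x | (Matrix.diagonal fun j => if j = i then (-1 : ℝ) else 1).mulVec x ∈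
        S ∩ {x | 0 < x i}} := by
    ext x
    have e : (Matrix.diagonal fun j => if j = i then (-1 : ℝ) else 1).mulVec x =
        fun j => if j = i then -x j else x j := by
      ext j; rw [Matrix.mulVec_diagonal]; split_ifs <;> simp
    rw [Set.mem_ofPred_eq, e]
    simp [hS]
  rw [h1, volume_preimage_mulVec _ (by simp [Matrix.det_diagonal]), Matrix.det_diagonal]
  have h2 : |∏ j, if j = i then (-1 : ℝ) else 1|⁻¹ = 1 := by simp
  rw [h2, ENNReal.ofReal_one, one_mul]
  apply le_antisymm
  · exact measure_mono (Set.inter_subset_inter_right _ fun x (hx : 0 < x i) => hx.le)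
  · have h3 : S ∩ {x | 0 ≤ x i} ⊆ (S ∩ {x | 0 < x i}) ∪ {x | x i = 0} := by
      rintro x ⟨h, h'⟩
      rcases eq_or_lt_of_le (show 0 ≤ x i from h') with h'' | h''
      · exact Or.inr h''.symm
      · exact Or.inl ⟨h, h''⟩
    refine (measure_mono h3).trans ((measure_union_le _ _).trans_eq ?_)
    rw [show volume {x : Fin 3 → ℝ | x i = 0} = 0 from Measure.pi_hyperplane _ i 0, add_zero]

/-- A set symmetric in the three coordinate planes has eight times the volume of its part in the
positive octant. -/
theorem volume_octant (S : Set (Fin 3 → ℝ))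
    (hS : ∀ i x, (fun j => if j = i then -x j else x j) ∈ S ↔ x ∈ S) :
    volume S = 8 * volume (S ∩ {x | 0 ≤ x 0 ∧ 0 ≤ x 1 ∧ 0 ≤ x 2}) := by
  rw [volume_half 0 S (hS 0), volume_half 1 _ ?_, volume_half 2 _ ?_, ← mul_assoc, ← mul_assoc]
  · congr 2
    · norm_num
    · ext x; simp [and_assoc]
  · intro x; simp [hS 2]
  · intro x; simp [hS 1]

/-- The standard simplex is one octant of the unit ball of the `ℓ¹` norm. -/
theorem volume_simplex :
    volume {x : Fin 3 → ℝ | (0 ≤ x 0 ∧ 0 ≤ x 1 ∧ 0 ≤ x 2) ∧ x 0 + x 1 + x 2 < 1}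
      = ENNReal.ofReal (1 / 6) := by
  have h := MeasureTheory.volume_sum_rpow_lt_one (Fin 3) (p := 1) le_rfl
  have h4 : Real.Gamma (3 + 1) = 6 := by
    have := Real.Gamma_nat_eq_factorial 3
    push_cast at this; rw [this]; norm_num [Nat.factorial]
  have h2 : Real.Gamma (1 + 1) = 1 := by norm_num
  rw [volume_octant _ (by
    intro i x
    simp only [Set.mem_ofPred_eq, Real.rpow_one]
    have : ∀ j, |if j = i then -x j else x j| = |x j| := by intro j; split_ifs <;> simp
    simp [this])] at h
  simp only [Fintype.card_fin, Nat.cast_ofNat, div_one, h4, h2] at h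
  have e : {x : Fin 3 → ℝ | ∑ i, |x i| ^ (1 : ℝ) < 1} ∩ {x | 0 ≤ x 0 ∧ 0 ≤ x 1 ∧ 0 ≤ x 2} =
      {x : Fin 3 → ℝ | (0 ≤ x 0 ∧ 0 ≤ x 1 ∧ 0 ≤ x 2) ∧ x 0 + x 1 + x 2 < 1} := by
    ext x
    simp only [Set.mem_inter_iff, Set.mem_ofPred_eq, Real.rpow_one, Fin.sum_univ_three]
    constructor
    · rintro ⟨h, h0, h1, h2⟩
      rw [abs_of_nonneg h0, abs_of_nonneg h1, abs_of_nonneg h2] at h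
      exact ⟨⟨h0, h1, h2⟩, h⟩
    · rintro ⟨⟨h0, h1, h2⟩, h⟩
      rw [abs_of_nonneg h0, abs_of_nonneg h1, abs_of_nonneg h2]
      exact ⟨h, h0, h1, h2⟩
  rw [e] at h
  have h8 : ENNReal.ofReal ((2 * 1) ^ 3 / 6) = 8 * ENNReal.ofReal (1 / 6) := by
    rw [show (8 : ENNReal) = ENNReal.ofReal 8 by simp, ← ENNReal.ofReal_mul (by norm_num)]
    norm_num
  rw [h8] at h
  exact (ENNReal.mul_right_inj (by norm_num) (by norm_num)).1 h

theorem volume_affine_simplex (A : Matrix (Fin 3) (Fin 3) ℝ) (b : Fin 3 → ℝ) (hA : A.det ≠ 0) :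
    volume {x | (0 ≤ (A.mulVec x + b) 0 ∧ 0 ≤ (A.mulVec x + b) 1 ∧ 0 ≤ (A.mulVec x + b) 2) ∧
      (A.mulVec x + b) 0 + (A.mulVec x + b) 1 + (A.mulVec x + b) 2 < 1}
      = ENNReal.ofReal (1 / (6 * |A.det|)) := by
  have h := volume_preimage_mulVec A hA ((fun y => y + b) ⁻¹'
    {x : Fin 3 → ℝ | (0 ≤ x 0 ∧ 0 ≤ x 1 ∧ 0 ≤ x 2) ∧ x 0 + x 1 + x 2 < 1})
  rw [measure_preimage_add_right, volume_simplex, ← ENNReal.ofReal_mul (by positivity)] at h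
  rw [show 1 / (6 * |A.det|) = |A.det|⁻¹ * (1 / 6) by field_simp, ← h]
  rfl

/-- The volume of a body whose slices orthogonal to the first axis are rectangles. -/
theorem volume_slices {a b : ℝ} (hab : a ≤ b) {f g : ℝ → ℝ} (hf : Continuous f)
    (hg : Continuous g) (hf0 : ∀ x ∈ Set.Ioc a b, 0 ≤ f x) (hg0 : ∀ x ∈ Set.Ioc a b, 0 ≤ g x) :
    volume {x : Fin 3 → ℝ | (a < x 0 ∧ x 0 ≤ b) ∧ (0 ≤ x 1 ∧ x 1 ≤ f (x 0)) ∧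
      (0 ≤ x 2 ∧ x 2 ≤ g (x 0))} = ENNReal.ofReal (∫ x in a..b, f x * g x) := by
  have hp := volume_preserving_piFinSuccAbove (fun _ : Fin 3 => ℝ) 0
  set T : Set (ℝ × (Fin 2 → ℝ)) := {p | (a < p.1 ∧ p.1 ≤ b) ∧ (0 ≤ p.2 0 ∧ p.2 0 ≤ f p.1) ∧
    (0 ≤ p.2 1 ∧ p.2 1 ≤ g p.1)} with hT
  have hTm : MeasurableSet T := by
    rw [hT]
    measurability
  have e : {x : Fin 3 → ℝ | (a < x 0 ∧ x 0 ≤ b) ∧ (0 ≤ x 1 ∧ x 1 ≤ f (x 0)) ∧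
      (0 ≤ x 2 ∧ x 2 ≤ g (x 0))} = MeasurableEquiv.piFinSuccAbove (fun _ : Fin 3 => ℝ) 0 ⁻¹' T := rfl
  rw [e, hp.measure_preimage_equiv, Measure.volume_eq_prod, Measure.prod_apply hTm]
  have hs : ∀ x, volume (Prod.mk x ⁻¹' T) =
      (Set.Ioc a b).indicator (fun x => ENNReal.ofReal (f x * g x)) x := by
    intro x
    by_cases hx : x ∈ Set.Ioc a b
    · rw [Set.indicator_of_mem hx, ENNReal.ofReal_mul (hf0 x hx)]
      have : Prod.mk x ⁻¹' T = Set.Icc (0 : Fin 2 → ℝ) ![f x, g x] := by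
        ext y
        simp [hT, Pi.le_def, Fin.forall_fin_two, hx.1, hx.2]
        tauto
      rw [this, Real.volume_Icc_pi]
      simp
    · rw [Set.indicator_of_notMem hx]
      have : Prod.mk x ⁻¹' T = ∅ := by
        ext y
        simp only [Set.mem_preimage, Set.mem_empty_iff_false, iff_false]
        exact fun h => hx h.1
      rw [this, measure_empty]
  simp_rw [hs]
  rw [lintegral_indicator measurableSet_Ioc, intervalIntegral.integral_of_le hab,
    ofReal_integral_eq_lintegral_ofReal]
  · exact ((hf.mul hg).integrableOn_Icc).mono_set Set.Ioc_subset_Icc_self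
  · filter_upwards [ae_restrict_mem measurableSet_Ioc] with x hx
    exact mul_nonneg (hf0 x hx) (hg0 x hx)

/-! ### The volume of the icosidodecahedron -/

/-- The part of the dodecahedron in the positive octant. -/
def dodecaOct : Set (Fin 3 → ℝ) :=
  {x | (0 ≤ x 0 ∧ 0 ≤ x 1 ∧ 0 ≤ x 2) ∧
    τ * x 0 + x 1 ≤ 1 ∧ τ * x 1 + x 2 ≤ 1 ∧ τ * x 2 + x 0 ≤ 1}

/-- The roof that the dodecahedron has over the face `x₀ = 1/τ² = 2 - τ` of its inscribed cube,
cut to the positive octant. -/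
def roof : Set (Fin 3 → ℝ) :=
  {x | (2 - τ < x 0 ∧ x 0 ≤ τ - 1) ∧ (0 ≤ x 1 ∧ x 1 ≤ 1 - τ * x 0) ∧
    (0 ≤ x 2 ∧ x 2 ≤ (1 - x 0) * (τ - 1))}

/-- The half, with `0 ≤ x₁`, of the corner cut off from the dodecahedron by the facet
`τ x₀ + x₂ / τ = 1` of the icosahedron. -/
def halfCorner : Set (Fin 3 → ℝ) :=
  {x | (0 ≤ x 1 ∧ τ * x 0 + x 1 ≤ 1 ∧ τ * x 2 + x 0 ≤ 1) ∧ 1 < τ * x 0 + x 2 * (τ - 1)}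

/-- The corner cut off from the dodecahedron by the facet `x₀ + x₁ + x₂ = 1` of the
icosahedron. -/
def fullCorner : Set (Fin 3 → ℝ) :=
  {x | (τ * x 0 + x 1 ≤ 1 ∧ τ * x 1 + x 2 ≤ 1 ∧ τ * x 2 + x 0 ≤ 1) ∧ 1 < x 0 + x 1 + x 2}

theorem volume_cyc (S : Set (Fin 3 → ℝ)) : volume {x : Fin 3 → ℝ | ![x 1, x 2, x 0] ∈ S} = volume S := by
  have hdet : (!![0, 1, 0; 0, 0, 1; 1, 0, 0] : Matrix (Fin 3) (Fin 3) ℝ).det = 1 := by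
    simp [Matrix.det_fin_three]
  have h := volume_preimage_mulVec !![0, 1, 0; 0, 0, 1; 1, 0, 0] (by rw [hdet]; norm_num) S
  rw [hdet] at h
  simp only [abs_one, inv_one, ENNReal.ofReal_one, one_mul] at h
  rw [← h]
  congr 1
  ext x
  simp [Matrix.vecHead, Matrix.vecTail]

theorem volume_cyc_two (S : Set (Fin 3 → ℝ)) :
    volume {x : Fin 3 → ℝ | ![x 2, x 0, x 1] ∈ S} = volume S := by
  rw [← volume_cyc S, ← volume_cyc {x : Fin 3 → ℝ | ![x 1, x 2, x 0] ∈ S}]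
  simp

theorem scaled_nonneg_iff {k A B : ℝ} (hk : 0 < k) (h : B = k * (1 - A)) : A ≤ 1 ↔ 0 ≤ B := by
  rw [h, mul_nonneg_iff_of_pos_left hk, sub_nonneg]

theorem scaled_lt_iff {k A B : ℝ} (hk : 0 < k) (h : 1 - B = k * (A - 1)) : 1 < A ↔ B < 1 := by
  rw [← sub_pos (a := 1), h, mul_pos_iff_of_pos_left hk, sub_pos]

theorem volume_roof : volume roof = ENNReal.ofReal ((5 * τ - 8) / 6) := by
  have ht := tau_sq
  have h1 := tau_gt
  have h2 := tau_lt
  have h := volume_slices (a := 2 - τ) (b := τ - 1) (by linarith) (f := fun x => 1 - τ * x)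
    (g := fun x => (1 - x) * (τ - 1)) (by fun_prop) (by fun_prop)
    (fun x hx => by nlinarith [hx.1, hx.2]) (fun x hx => by nlinarith [hx.1, hx.2])
  refine h.trans ?_
  congr 1
  have e : ∀ x, (1 - τ * x) * ((1 - x) * (τ - 1)) =
      (τ - 1) - (τ ^ 2 - 1) * x + (τ * (τ - 1)) * x ^ 2 := by intro x; ring
  simp_rw [e]
  rw [intervalIntegral.integral_add (by apply Continuous.intervalIntegrable; fun_prop)
    (by apply Continuous.intervalIntegrable; fun_prop),
    intervalIntegral.integral_sub (by apply Continuous.intervalIntegrable; fun_prop)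
    (by apply Continuous.intervalIntegrable; fun_prop),
    intervalIntegral.integral_const_mul, intervalIntegral.integral_const_mul]
  simp only [intervalIntegral.integral_const, integral_id, integral_pow, smul_eq_mul]
  push_cast
  grind

theorem volume_fullCorner : volume fullCorner = ENNReal.ofReal ((34 - 21 * τ) / 12) := by
  have ht := tau_sq
  have h0 := tau_pos
  have hdet : (!![-τ ^ 3, -τ ^ 2, 0; 0, -τ ^ 3, -τ ^ 2; -τ ^ 2, 0, -τ ^ 3] :
      Matrix (Fin 3) (Fin 3) ℝ).det = -(2 * τ ^ 8) := by
    simp [Matrix.det_fin_three]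
    grind
  have h := volume_affine_simplex _ (fun _ => τ ^ 2) (by rw [hdet]; exact neg_ne_zero.2 (by positivity))
  rw [hdet, abs_neg, abs_of_pos (by positivity)] at h
  have e : 1 / (6 * (2 * τ ^ 8)) = (34 - 21 * τ) / 12 := by
    rw [div_eq_div_iff (by positivity) (by norm_num)]
    grind
  rw [← e, ← h]
  congr 1
  ext x
  simp only [fullCorner, Set.mem_ofPred_eq, Matrix.mulVec, dotProduct, Fin.sum_univ_three, Pi.add_apply]
  simp
  refine and_congr (and_congr (scaled_nonneg_iff (k := τ ^ 2) ?_ ?_)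
    (and_congr (scaled_nonneg_iff (k := τ ^ 2) ?_ ?_) (scaled_nonneg_iff (k := τ ^ 2) ?_ ?_)))
    (scaled_lt_iff (k := τ ^ 4) ?_ ?_)
  any_goals positivity
  all_goals grind

theorem volume_halfCorner : volume halfCorner = ENNReal.ofReal ((34 - 21 * τ) / 24) := by
  have ht := tau_sq
  have h0 := tau_pos
  have hdet : (!![0, 2 * τ ^ 2, 0; -2 * τ ^ 3, -2 * τ ^ 2, 0; -τ ^ 2, 0, -τ ^ 3] :
      Matrix (Fin 3) (Fin 3) ℝ).det = -(4 * τ ^ 8) := by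
    simp [Matrix.det_fin_three]
    ring
  have h := volume_affine_simplex _ ![0, 2 * τ ^ 2, τ ^ 2] (by rw [hdet]; exact neg_ne_zero.2 (by positivity))
  rw [hdet, abs_neg, abs_of_pos (by positivity)] at h
  have e : 1 / (6 * (4 * τ ^ 8)) = (34 - 21 * τ) / 24 := by
    rw [div_eq_div_iff (by positivity) (by norm_num)]
    grind
  rw [← e, ← h]
  congr 1
  ext x
  simp only [halfCorner, Set.mem_ofPred_eq, Matrix.mulVec, dotProduct, Fin.sum_univ_three, Pi.add_apply]
  simp
  refine and_congr (and_congr (by rw [mul_nonneg_iff_of_pos_left (by positivity)])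
    (and_congr (scaled_nonneg_iff (k := 2 * τ ^ 2) ?_ ?_) (scaled_nonneg_iff (k := τ ^ 2) ?_ ?_)))
    (scaled_lt_iff (k := τ ^ 4) ?_ ?_)
  any_goals positivity
  all_goals grind

theorem measurableSet_linear_le (a b c d : ℝ) :
    MeasurableSet {x : Fin 3 → ℝ | a * x 0 + b * x 1 + c * x 2 ≤ d} :=
  measurableSet_le (by fun_prop) (by fun_prop)

theorem roof_iff (a b c : ℝ) :
    (((0 ≤ a ∧ 0 ≤ b ∧ 0 ≤ c) ∧ τ * a + b ≤ 1 ∧ τ * b + c ≤ 1 ∧ τ * c + a ≤ 1) ∧ 2 - τ < a) ↔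
    (2 - τ < a ∧ a ≤ τ - 1) ∧ (0 ≤ b ∧ b ≤ 1 - τ * a) ∧ 0 ≤ c ∧ c ≤ (1 - a) * (τ - 1) := by
  have ht := tau_sq
  have hg := tau_gt
  have hl := tau_lt
  have k : 0 ≤ τ - 1 := by linarith
  constructor
  · rintro ⟨⟨⟨ha, hb, hc⟩, h1, h2, h3⟩, h⟩
    refine ⟨⟨h, ?_⟩, ⟨hb, by linarith⟩, hc, ?_⟩
    · nlinarith [mul_nonneg k (sub_nonneg.2 h1), mul_nonneg k hb]
    · nlinarith [mul_nonneg k (sub_nonneg.2 h3)]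
  · rintro ⟨⟨h, h'⟩, ⟨hb, hb'⟩, hc, hc'⟩
    refine ⟨⟨⟨by linarith, hb, hc⟩, by linarith, ?_, ?_⟩, h⟩
    · nlinarith
    · nlinarith

theorem roof_small {a b c : ℝ} (h : 2 - τ < a) (h1 : τ * a + b ≤ 1) (h3 : τ * c + a ≤ 1) :
    b ≤ 2 - τ ∧ c ≤ 2 - τ := by
  have ht := tau_sq
  have hg := tau_gt
  constructor <;> nlinarith

/-- The positive octant of the dodecahedron consists of a cube and three roofs. -/
theorem volume_dodecaOct :
    volume dodecaOct = ENNReal.ofReal ((2 - τ) ^ 3) + 3 * volume roof := by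
  have ht := tau_sq
  have hg := tau_gt
  have hl := tau_lt
  have h0 : ∀ S : Set (Fin 3 → ℝ), _ := fun S => measure_inter_add_sdiff (μ := volume) S
    (measurableSet_linear_le 1 0 0 (2 - τ))
  have h1 : ∀ S : Set (Fin 3 → ℝ), _ := fun S => measure_inter_add_sdiff (μ := volume) S
    (measurableSet_linear_le 0 1 0 (2 - τ))
  have h2 : ∀ S : Set (Fin 3 → ℝ), _ := fun S => measure_inter_add_sdiff (μ := volume) S
    (measurableSet_linear_le 0 0 1 (2 - τ))
  rw [← h0, ← h1, ← h2]
  have e3 : (3 : ENNReal) * volume roof = volume roof + volume roof + volume roof := by ring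
  rw [e3, ← add_assoc, ← add_assoc]
  simp only [one_mul, zero_mul, zero_add, add_zero]
  congr 1
  · congr 1
    · congr 1
      · have : ENNReal.ofReal ((2 - τ) ^ 3) =
            volume (Set.Icc (0 : Fin 3 → ℝ) fun _ => 2 - τ) := by
          rw [Real.volume_Icc_pi]
          simp [ENNReal.ofReal_pow (by linarith : (0 : ℝ) ≤ 2 - τ)]
        rw [this]
        congr 1
        ext x
        have hx : x ∈ Set.Icc (0 : Fin 3 → ℝ) (fun _ => 2 - τ) ↔
            (0 ≤ x 0 ∧ 0 ≤ x 1 ∧ 0 ≤ x 2) ∧ x 0 ≤ 2 - τ ∧ x 1 ≤ 2 - τ ∧ x 2 ≤ 2 - τ := by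
          simp [Set.mem_Icc, Pi.le_def, Fin.forall_fin_succ]
        rw [hx]
        simp only [dodecaOct, Set.mem_inter_iff, Set.mem_ofPred_eq]
        constructor
        · rintro ⟨⟨⟨⟨h, -⟩, h0⟩, h1⟩, h2⟩
          exact ⟨h, h0, h1, h2⟩
        · rintro ⟨h, h0, h1, h2⟩
          refine ⟨⟨⟨⟨h, ?_, ?_, ?_⟩, h0⟩, h1⟩, h2⟩ <;> nlinarith
      · rw [← volume_cyc_two roof]
        congr 1
        ext x
        simp only [dodecaOct, roof, Set.mem_inter_iff, Set.mem_sdiff, Set.mem_ofPred_eq, not_le]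
        refine Iff.trans ?_ (roof_iff (x 2) (x 0) (x 1))
        constructor
        · rintro ⟨⟨⟨⟨⟨h0, h1, h2⟩, g0, g1, g2⟩, -⟩, -⟩, h⟩
          exact ⟨⟨⟨h2, h0, h1⟩, g2, g0, g1⟩, h⟩
        · rintro ⟨⟨⟨h2, h0, h1⟩, g2, g0, g1⟩, h⟩
          have := roof_small h g2 g1
          exact ⟨⟨⟨⟨⟨h0, h1, h2⟩, g0, g1, g2⟩, this.1⟩, this.2⟩, h⟩
    · rw [← volume_cyc roof]
      congr 1
      ext x
      simp only [dodecaOct, roof, Set.mem_inter_iff, Set.mem_sdiff, Set.mem_ofPred_eq, not_le]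
      refine Iff.trans ?_ (roof_iff (x 1) (x 2) (x 0))
      constructor
      · rintro ⟨⟨⟨⟨h0, h1, h2⟩, g0, g1, g2⟩, -⟩, h⟩
        exact ⟨⟨⟨h1, h2, h0⟩, g1, g2, g0⟩, h⟩
      · rintro ⟨⟨⟨h1, h2, h0⟩, g1, g2, g0⟩, h⟩
        exact ⟨⟨⟨⟨h0, h1, h2⟩, g0, g1, g2⟩, (roof_small h g1 g0).2⟩, h⟩
  · congr 1
    ext x
    simp only [dodecaOct, roof, Set.mem_sdiff, Set.mem_ofPred_eq, not_le]
    exact roof_iff _ _ _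

/-- A point `(a, b, c)` of the half corner lies in the positive octant and satisfies all other facet
inequalities, so the corners that are cut off do not overlap. -/
theorem halfCorner_imp {a b c : ℝ} (hb : 0 ≤ b) (h1 : τ * a + b ≤ 1) (h3 : τ * c + a ≤ 1)
    (h : 1 < τ * a + c * (τ - 1)) :
    0 ≤ a ∧ 0 ≤ c ∧ τ * b + c ≤ 1 ∧ a + b + c ≤ 1 ∧ τ * b + a * (τ - 1) ≤ 1 ∧
      τ * c + b * (τ - 1) ≤ 1 := by
  have ht := tau_sq
  have hg := tau_gt
  have hl := tau_lt
  have k : 0 ≤ τ - 1 := by linarith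
  have hc : 0 ≤ c := by nlinarith
  have ha : 0 ≤ a := by nlinarith
  refine ⟨ha, hc, ?_, ?_, ?_, ?_⟩
  all_goals nlinarith

/-- Cutting the positive octant of the dodecahedron by the facets of the icosahedron removes one
full corner and three half corners. -/
theorem volume_dodecaOct_cut :
    volume (icosidodeca ∩ {x | 0 ≤ x 0 ∧ 0 ≤ x 1 ∧ 0 ≤ x 2}) + 3 * volume halfCorner
      + volume fullCorner = volume dodecaOct := by
  have ht := tau_sq
  have hg := tau_gt
  have hl := tau_lt
  have hinv : ∀ x : ℝ, x / τ = x * (τ - 1) := by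
    intro x; rw [div_eq_iff tau_pos.ne']; linear_combination (-x) * ht
  have h0 : ∀ S : Set (Fin 3 → ℝ), _ := fun S => measure_inter_add_sdiff (μ := volume) S
    (measurableSet_linear_le 1 1 1 1)
  have h1 : ∀ S : Set (Fin 3 → ℝ), _ := fun S => measure_inter_add_sdiff (μ := volume) S
    (measurableSet_linear_le τ 0 (τ - 1) 1)
  have h2 : ∀ S : Set (Fin 3 → ℝ), _ := fun S => measure_inter_add_sdiff (μ := volume) S
    (measurableSet_linear_le (τ - 1) τ 0 1)
  have h3 : ∀ S : Set (Fin 3 → ℝ), _ := fun S => measure_inter_add_sdiff (μ := volume) S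
    (measurableSet_linear_le 0 (τ - 1) τ 1)
  rw [← h0 dodecaOct, ← h1 (dodecaOct ∩ _), ← h2 (dodecaOct ∩ _ ∩ _), ← h3 (dodecaOct ∩ _ ∩ _ ∩ _)]
  have e3 : (3 : ENNReal) * volume halfCorner =
    volume halfCorner + volume halfCorner + volume halfCorner := by ring
  rw [e3, ← add_assoc, ← add_assoc]
  simp only [one_mul, zero_mul, zero_add, add_zero]
  congr 1
  · congr 1
    · congr 1
      · congr 1
        · congr 1
          ext x
          simp only [icosidodeca, icosa, dodeca, dodecaOct, Set.mem_inter_iff, Set.mem_ofPred_eq,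
            hinv]
          constructor
          · rintro ⟨h, x0, x1, x2⟩
            simp only [abs_mul, abs_of_nonneg x0, abs_of_nonneg x1, abs_of_nonneg x2,
              abs_of_pos tau_pos, abs_of_nonneg (show 0 ≤ τ - 1 by linarith)] at h
            obtain ⟨⟨q, q0, q1, q2⟩, g0, g1, g2⟩ := h
            refine ⟨⟨⟨⟨⟨⟨x0, x1, x2⟩, g0, g1, g2⟩, q⟩, ?_⟩, ?_⟩, ?_⟩ <;> linarith
          · rintro ⟨⟨⟨⟨⟨⟨x0, x1, x2⟩, g0, g1, g2⟩, q⟩, q0⟩, q1⟩, q2⟩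
            refine ⟨?_, x0, x1, x2⟩
            simp only [abs_mul, abs_of_nonneg x0, abs_of_nonneg x1, abs_of_nonneg x2,
              abs_of_pos tau_pos, abs_of_nonneg (show 0 ≤ τ - 1 by linarith)]
            refine ⟨⟨q, ?_, ?_, ?_⟩, g0, g1, g2⟩ <;> linarith
        · rw [← volume_cyc_two halfCorner]
          congr 1
          ext x
          simp only [halfCorner, dodecaOct, Set.mem_inter_iff, Set.mem_sdiff, Set.mem_ofPred_eq,
            not_le]
          change (0 ≤ x 0 ∧ τ * x 2 + x 0 ≤ 1 ∧ τ * x 1 + x 2 ≤ 1) ∧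
            1 < τ * x 2 + x 1 * (τ - 1) ↔ _
          constructor
          · rintro ⟨⟨x0, g2, g1⟩, q⟩
            obtain ⟨x2, x1, g0, r, r1, r2⟩ := halfCorner_imp x0 g2 g1 q
            refine ⟨⟨⟨⟨⟨⟨x0, x1, x2⟩, g0, g1, g2⟩, ?_⟩, ?_⟩, ?_⟩, ?_⟩ <;> linarith
          · rintro ⟨⟨⟨⟨⟨⟨x0, x1, x2⟩, g0, g1, g2⟩, -⟩, -⟩, -⟩, q⟩
            exact ⟨⟨x0, g2, g1⟩, by linarith⟩
      · rw [← volume_cyc halfCorner]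
        congr 1
        ext x
        simp only [halfCorner, dodecaOct, Set.mem_inter_iff, Set.mem_sdiff, Set.mem_ofPred_eq,
          not_le]
        change (0 ≤ x 2 ∧ τ * x 1 + x 2 ≤ 1 ∧ τ * x 0 + x 1 ≤ 1) ∧
          1 < τ * x 1 + x 0 * (τ - 1) ↔ _
        constructor
        · rintro ⟨⟨x2, g1, g0⟩, q⟩
          obtain ⟨x1, x0, g2, r, r1, r2⟩ := halfCorner_imp x2 g1 g0 q
          refine ⟨⟨⟨⟨⟨x0, x1, x2⟩, g0, g1, g2⟩, ?_⟩, ?_⟩, ?_⟩ <;> linarith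
        · rintro ⟨⟨⟨⟨⟨x0, x1, x2⟩, g0, g1, g2⟩, -⟩, -⟩, q⟩
          exact ⟨⟨x2, g1, g0⟩, by linarith⟩
    · congr 1
      ext x
      simp only [halfCorner, dodecaOct, Set.mem_inter_iff, Set.mem_sdiff, Set.mem_ofPred_eq,
        not_le]
      constructor
      · rintro ⟨⟨x1, g0, g2⟩, q⟩
        obtain ⟨x0, x2, g1, r, r1, r2⟩ := halfCorner_imp x1 g0 g2 q
        refine ⟨⟨⟨⟨x0, x1, x2⟩, g0, g1, g2⟩, ?_⟩, ?_⟩ <;> linarith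
      · rintro ⟨⟨⟨⟨x0, x1, x2⟩, g0, g1, g2⟩, -⟩, q⟩
        exact ⟨⟨x1, g0, g2⟩, by linarith⟩
  · congr 1
    ext x
    simp only [fullCorner, dodecaOct, Set.mem_sdiff, Set.mem_ofPred_eq, not_le]
    constructor
    · rintro ⟨⟨g0, g1, g2⟩, q⟩
      refine ⟨⟨⟨?_, ?_, ?_⟩, g0, g1, g2⟩, q⟩ <;> nlinarith
    · rintro ⟨⟨-, g⟩, q⟩
      exact ⟨g, q⟩

theorem volume_icosidodeca : (volume icosidodeca).toReal = (14 + 17 * τ) / (3 * τ ^ 6) := by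
  have ht := tau_sq
  have h0 := tau_pos
  have hg := tau_gt
  have hl := tau_lt
  have hsym : ∀ i x, (fun j => if j = i then -x j else x j) ∈ icosidodeca ↔ x ∈ icosidodeca := by
    intro i x
    have e1 : ∀ j, |if j = i then -x j else x j| = |x j| := by intro j; split_ifs <;> simp
    simp only [icosidodeca, icosa, dodeca, Set.mem_inter_iff, Set.mem_ofPred_eq, abs_mul, abs_div,
      e1]
  have hcut := volume_dodecaOct_cut
  rw [volume_dodecaOct, volume_halfCorner, volume_fullCorner, volume_roof] at hcut
  have hfin : volume (icosidodeca ∩ {x | 0 ≤ x 0 ∧ 0 ≤ x 1 ∧ 0 ≤ x 2}) ≠ ⊤ := by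
    intro h
    rw [h] at hcut
    simp at hcut
    exact absurd hcut.symm (by finiteness)
  have hr := congrArg ENNReal.toReal hcut
  rw [ENNReal.toReal_add (by finiteness) (by finiteness),
    ENNReal.toReal_add (by finiteness) (by finiteness),
    ENNReal.toReal_add (by finiteness) (by finiteness)] at hr
  simp only [ENNReal.toReal_mul, ENNReal.toReal_ofNat] at hr
  have hc : 0 ≤ 34 - 21 * τ := by
    have e : (34 - 21 * τ) * τ ^ 8 = 1 := by grind
    by_contra! hneg
    nlinarith [mul_neg_of_neg_of_pos hneg (by positivity : 0 < τ ^ 8)]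
  rw [ENNReal.toReal_ofReal (by linarith), ENNReal.toReal_ofReal (by linarith),
    ENNReal.toReal_ofReal (pow_nonneg (by linarith) 3),
    ENNReal.toReal_ofReal (by linarith)] at hr
  rw [volume_octant _ hsym, ENNReal.toReal_mul, eq_div_iff (by positivity)]
  simp only [ENNReal.toReal_ofNat]
  grind

/-! ### The density -/

theorem volume_smul_icosidodeca {c : ℝ} (hc : 0 < c) :
    (volume (c • icosidodeca)).toReal = c ^ 3 * ((14 + 17 * τ) / (3 * τ ^ 6)) := by
  rw [Measure.addHaar_smul, ENNReal.toReal_mul, volume_icosidodeca,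
    ENNReal.toReal_ofReal (abs_nonneg _), Module.finrank_fin_fun, abs_of_pos (by positivity)]

theorem density_le {c : ℝ} (hc : 0 < c) {B : Matrix (Fin 3) (Fin 3) ℝ} (hB : IsUnit B.det)
    (hp : IsPackingLattice (c • icosidodeca) (latticeOf B)) :
    (volume (c • icosidodeca)).toReal / |B.det| ≤ (14 + 17 * τ) / 48 := by
  have h0 := tau_pos
  have hd : 0 < |B.det| := abs_pos.2 hB.ne_zero
  have h := packing_det_bound hc hB hp
  rw [volume_smul_icosidodeca hc, div_le_iff₀ hd, mul_div_assoc', div_le_iff₀ (by positivity)]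
  nlinarith

theorem det_fcc (k : ℝ) : (k • D3).det = -(2 * k ^ 3) := by
  rw [Matrix.det_smul, det_D3, Fintype.card_fin]; ring

theorem density_fcc {c : ℝ} (hc : 0 < c) :
    (volume (c • icosidodeca)).toReal / |((2 * c / τ ^ 2) • D3).det| = (14 + 17 * τ) / 48 := by
  have h0 := tau_pos
  rw [volume_smul_icosidodeca hc, det_fcc, abs_neg, abs_of_pos (by positivity)]
  field_simp
  norm_num

/-- The lattice packing density of the icosidodecahedron is `(14 + 17τ)/48`, and
`2D₃` is a densest packing lattice of the scaled copy `(1 + τ)·P_id`. -/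
theorem stmt_16 :
    packDensity icosidodeca = (14 + 17 * τ) / 48 ∧
    IsUnit ((2 : ℝ) • D3).det ∧
    IsPackingLattice ((1 + τ) • icosidodeca) (latticeOf ((2 : ℝ) • D3)) ∧
    (volume ((1 + τ) • icosidodeca)).toReal / |((2 : ℝ) • D3).det| =
      (14 + 17 * τ) / 48 ∧
    (∀ B : Matrix (Fin 3) (Fin 3) ℝ, IsUnit B.det →
      IsPackingLattice ((1 + τ) • icosidodeca) (latticeOf B) →
      (volume ((1 + τ) • icosidodeca)).toReal / |B.det| ≤ (14 + 17 * τ) / 48) := by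
  have h0 := tau_pos
  have ht := tau_sq
  have hc : 0 < 1 + τ := by linarith
  have e2 : (2 : ℝ) • D3 = (2 * (1 + τ) / τ ^ 2) • D3 := by
    congr 1; rw [ht]; field_simp; ring
  refine ⟨?_, ?_, ?_, ?_, fun B hB hp => density_le hc hB hp⟩
  · have hg : IsGreatest {r | ∃ B : Matrix (Fin 3) (Fin 3) ℝ, IsUnit B.det ∧
        IsPackingLattice icosidodeca (latticeOf B) ∧
        r = (volume icosidodeca).toReal / |B.det|} ((14 + 17 * τ) / 48) := by
      constructor
      · refine ⟨(2 * 1 / τ ^ 2) • D3, ?_, ?_, ?_⟩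
        · rw [det_fcc]
          exact isUnit_iff_ne_zero.2 (neg_ne_zero.2 (by positivity))
        · simpa only [one_smul] using fcc_packing one_pos
        · simpa only [one_smul] using (density_fcc one_pos).symm
      · rintro r ⟨B, hB, hp, rfl⟩
        simpa only [one_smul] using
          density_le one_pos hB (by simpa only [one_smul] using hp)
    exact hg.csSup_eq
  · rw [det_fcc]; norm_num
  · rw [e2]; exact fcc_packing hc
  · rw [e2]; exact density_fcc hc
end

section
/- Let P_rco = {x ∈ ℝ³ : |x₁| + |x₂| ≤ 2, |x₁| + |x₃| ≤ 2, |x₂| + |x₃| ≤ 2, |xᵢ| ≤ √2 for i = 1,2,3, and |x₁| + |x₂| + |x₃| ≤ 4 − √2} be the rhombic cubeoctahedron. Then the lattice packing density of P_rco equals δ*(P_rco) = (16√2 − 20)/3, and it is attained by the packing lattice 2D₃, where D₃ is the lattice with basis (1,1,0), (1,0,1), (0,1,1). -/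
/-!
Upper bound. The rhombic cubeoctahedron contains the ball of radius `√2` (`ball_subset`), so every
nonzero vector of a packing lattice has squared length at least `8` (`norm_sq_ge`). A ternary lattice
with minimal squared length `m` satisfies `2 det² ≥ m³` by Gauss's theorem, which gives `det ≥ 16`
(`det_ge`). For Gauss's theorem, choose among all bases of the lattice (with fixed orientation) one
minimizing the sum of the squared lengths (`exists_reduced`). No basis vector can then be shortened by
adding integer combinations of the other two, and these inequalities imply that twice the Gram
determinant is at least the product of the squared lengths of the basis vectors (`gauss_form`).

Attainment. The body lies in the rhombic dodecahedron `|xᵢ| + |xⱼ| ≤ 2`, whose translates by `2D₃`,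
a lattice of determinant `16`, do not overlap (`packing_D3`). The volume `(256√2 - 320) / 3` is
obtained by integrating the areas of the slices `x₀ = const`, which are truncated squares
(`volume_rco`).
-/

open MeasureTheory

/-- The rhombic cubeoctahedron. -/
noncomputable def rhombiCubeocta : Set (Fin 3 → ℝ) :=
  {x | |x 0| + |x 1| ≤ 2 ∧ |x 0| + |x 2| ≤ 2 ∧ |x 1| + |x 2| ≤ 2 ∧
       (∀ i, |x i| ≤ Real.sqrt 2) ∧ |x 0| + |x 1| + |x 2| ≤ 4 - Real.sqrt 2}

/-! ### Gauss's inequality for reduced ternary forms -/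

/-- Gauss's inequality `2 det ≥ abc` for a reduced Gram matrix with diagonal `a ≤ b ≤ c` and
nonnegative off-diagonal entries `r` (for `ab`), `s` (for `ac`), `t` (for `bc`). -/
lemma gauss_pos (a b c r s t : ℝ) (ha : 0 < a) (hab : a ≤ b) (hbc : b ≤ c)
    (hr : 0 ≤ r) (hs : 0 ≤ s) (ht : 0 ≤ t) (hra : 2 * r ≤ a) (hsa : 2 * s ≤ a)
    (htb : 2 * t ≤ b) :
    0 ≤ a * b * c + 4 * r * s * t - 2 * a * t ^ 2 - 2 * b * s ^ 2 - 2 * c * r ^ 2 := by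
  have hb : 0 < b := by linarith
  have hc : 0 < c := by linarith
  have h1 : 0 ≤ a * t * (b - 2 * t) := by apply mul_nonneg <;> nlinarith
  have h2 : 0 ≤ b * s * (a - 2 * s) := by apply mul_nonneg <;> nlinarith
  have h3 : 0 ≤ c * r * (a - 2 * r) := by apply mul_nonneg <;> nlinarith
  -- The expression is concave in `t`; `e0` and `e1` are the bounds at `t = 0` and `t = b / 2`.
  have e0 : 0 ≤ a * b * c - 2 * b * s ^ 2 - 2 * c * r ^ 2 := by
    have : 0 ≤ b * (a - 2 * s) * a := by apply mul_nonneg (mul_nonneg _ _) <;> linarith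
    have : 0 ≤ c * (a - 2 * r) * a := by apply mul_nonneg (mul_nonneg _ _) <;> linarith
    have : 0 ≤ a * b * (c - a) := by apply mul_nonneg (mul_nonneg _ _) <;> linarith
    have : 0 ≤ a * c * (b - a) := by apply mul_nonneg (mul_nonneg _ _) <;> linarith
    nlinarith
  have e1 : 0 ≤ a * b * c + 2 * b * r * s - a * b ^ 2 / 2 - 2 * b * s ^ 2 - 2 * c * r ^ 2 := by
    have : 0 ≤ b * (a - 2 * s) * (a - 2 * r) := by apply mul_nonneg (mul_nonneg _ _) <;> linarith
    have : 0 ≤ a * (a - 2 * r) * (c - b) := by apply mul_nonneg (mul_nonneg _ _) <;> linarith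
    have : 0 ≤ a * b * (c - b) := by apply mul_nonneg (mul_nonneg _ _) <;> linarith
    have : 0 ≤ a * c * (b - a) := by apply mul_nonneg (mul_nonneg _ _) <;> linarith
    nlinarith
  have k : 0 ≤ b * (a * b * c + 4 * r * s * t - 2 * a * t ^ 2 - 2 * b * s ^ 2
      - 2 * c * r ^ 2) := by
    have := mul_nonneg (show 0 ≤ b - 2 * t by linarith) e0
    have := mul_nonneg (show 0 ≤ 2 * t by linarith) e1
    have := mul_nonneg hb.le h1
    linarith
  exact nonneg_of_mul_nonneg_right k hb

/-- The counterpart of `gauss_pos` for nonpositive off-diagonal entries `-r`, `-s`, `-t`. Here the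
condition `hsum`, which says that the sum of the three basis vectors is no shorter than the longest
of them, is needed as well. -/
lemma gauss_neg (a b c r s t : ℝ) (ha : 0 < a) (hab : a ≤ b) (hbc : b ≤ c)
    (hr : 0 ≤ r) (hs : 0 ≤ s) (ht : 0 ≤ t) (hra : 2 * r ≤ a) (hsa : 2 * s ≤ a)
    (htb : 2 * t ≤ b) (hsum : 2 * (r + s + t) ≤ a + b) :
    0 ≤ a * b * c - 4 * r * s * t - 2 * a * t ^ 2 - 2 * b * s ^ 2 - 2 * c * r ^ 2 := by
  have hb : 0 < b := by linarith
  have hr2 : 0 ≤ (c - b) * (a * b - 2 * r ^ 2) := by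
    apply mul_nonneg <;> nlinarith
  have hrs : 0 ≤ r * s := mul_nonneg hr hs
  -- The expression is increasing in `c`, so `c` may be replaced by `b`.
  suffices 0 ≤ a * b ^ 2 - 4 * r * s * t - 2 * a * t ^ 2 - 2 * b * s ^ 2 - 2 * b * r ^ 2 by
    linarith
  have ht2 : 0 ≤ a * (b ^ 2 - 4 * t ^ 2) := mul_nonneg ha.le (by nlinarith)
  have haab : 0 ≤ a * b * (b - a) := by apply mul_nonneg (mul_nonneg _ _) <;> linarith
  rcases le_total (2 * (r + s)) a with h | h
  · have : 0 ≤ b * (a ^ 2 - 4 * (r + s) ^ 2) := mul_nonneg hb.le (by nlinarith)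
    have : 0 ≤ r * s * (b - t) := mul_nonneg hrs (by linarith)
    nlinarith
  · -- With `u = r + s` fixed the expression is least when `r` or `s` equals `a / 2`.
    obtain ⟨u, hu⟩ : ∃ u, u = r + s := ⟨_, rfl⟩
    have h1 : 0 ≤ (a - 2 * r) * (a - 2 * s) * (b - t) := by
      apply mul_nonneg (mul_nonneg _ _) <;> linarith
    have h2 : 0 ≤ a * b ^ 2 - 2 * a * t ^ 2 - 2 * b * u ^ 2 + 2 * a * (u - a / 2) * (b - t) := by
      -- The left-over expression decreases in `t`, so only `t = w`, allowed by `hsum`, matters.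
      obtain ⟨w, hw⟩ : ∃ w, w = (a + b) / 2 - u := ⟨_, rfl⟩
      have hw1 : 0 ≤ a * ((w - t) * (w + t)) := by
        apply mul_nonneg ha.le (mul_nonneg _ _) <;> linarith
      have hw2 : 0 ≤ a * ((2 * u - a) * (w - t)) := by
        apply mul_nonneg ha.le (mul_nonneg _ _) <;> linarith
      have hw3 : 0 ≤ b * ((2 * u - a) * (a - u)) := by
        apply mul_nonneg hb.le (mul_nonneg _ _) <;> linarith
      subst hw
      nlinarith
    subst hu
    nlinarith

/-- Changing signs of the basis vectors makes the off-diagonal entries all nonnegative or all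
nonpositive, according to the sign of `r * s * t`. The hypotheses `h1`–`h4` say that `±v₁ ± v₂ ± v₃`
is never shorter than `v₃`. -/
lemma gauss_sorted (a b c r s t : ℝ) (ha : 0 < a) (hab : a ≤ b) (hbc : b ≤ c)
    (hr : 2 * |r| ≤ a) (hs : 2 * |s| ≤ a) (ht : 2 * |t| ≤ b)
    (h1 : 0 ≤ a + b + 2 * (r + s + t)) (h2 : 0 ≤ a + b + 2 * (r - s - t))
    (h3 : 0 ≤ a + b + 2 * (-r + s - t)) (h4 : 0 ≤ a + b + 2 * (-r - s + t)) :
    a * b * c ≤ 2 * (a * b * c + 2 * r * s * t - a * t ^ 2 - b * s ^ 2 - c * r ^ 2) := by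
  rcases le_total 0 r with hr0 | hr0 <;> rcases le_total 0 s with hs0 | hs0 <;>
    rcases le_total 0 t with ht0 | ht0 <;>
    simp only [abs_of_nonneg, abs_of_nonpos, hr0, hs0, ht0] at hr hs ht
  · linarith [gauss_pos a b c r s t ha hab hbc (by linarith) (by linarith) (by linarith) (by linarith) (by linarith) (by linarith)]
  · linarith [gauss_neg a b c r s (-t) ha hab hbc (by linarith) (by linarith) (by linarith) (by linarith) (by linarith) (by linarith) (by linarith)]
  · linarith [gauss_neg a b c r (-s) t ha hab hbc (by linarith) (by linarith) (by linarith) (by linarith) (by linarith) (by linarith) (by linarith)]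
  · linarith [gauss_pos a b c r (-s) (-t) ha hab hbc (by linarith) (by linarith) (by linarith) (by linarith) (by linarith) (by linarith)]
  · linarith [gauss_neg a b c (-r) s t ha hab hbc (by linarith) (by linarith) (by linarith) (by linarith) (by linarith) (by linarith) (by linarith)]
  · linarith [gauss_pos a b c (-r) s (-t) ha hab hbc (by linarith) (by linarith) (by linarith) (by linarith) (by linarith) (by linarith)]
  · linarith [gauss_pos a b c (-r) (-s) t ha hab hbc (by linarith) (by linarith) (by linarith) (by linarith) (by linarith) (by linarith)]
  · linarith [gauss_neg a b c (-r) (-s) (-t) ha hab hbc (by linarith) (by linarith) (by linarith) (by linarith) (by linarith) (by linarith) (by linarith)]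

/-- `gauss_sorted` without the ordering of the diagonal entries. -/
lemma gauss_form (a b c r s t : ℝ) (ha : 0 < a) (hb : 0 < b) (hc : 0 < c)
    (hra : 2 * |r| ≤ a) (hrb : 2 * |r| ≤ b) (hsa : 2 * |s| ≤ a) (hsc : 2 * |s| ≤ c)
    (htb : 2 * |t| ≤ b) (htc : 2 * |t| ≤ c)
    (h : ∀ x, x = a ∨ x = b ∨ x = c →
      x ≤ a + b + c + 2 * (r + s + t) ∧ x ≤ a + b + c + 2 * (r - s - t) ∧
      x ≤ a + b + c + 2 * (-r + s - t) ∧ x ≤ a + b + c + 2 * (-r - s + t)) :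
    a * b * c ≤ 2 * (a * b * c + 2 * r * s * t - a * t ^ 2 - b * s ^ 2 - c * r ^ 2) := by
  obtain ⟨a1, a2, a3, a4⟩ := h a (by simp)
  obtain ⟨b1, b2, b3, b4⟩ := h b (by simp)
  obtain ⟨c1, c2, c3, c4⟩ := h c (by simp)
  rcases le_total a b with hab | hab <;> rcases le_total b c with hbc | hbc <;>
    rcases le_total a c with hac | hac
  · linarith [gauss_sorted a b c r s t ha hab hbc hra hsa htb (by linarith) (by linarith) (by linarith) (by linarith)]
  · linarith [gauss_sorted a b c r s t ha hab hbc hra hsa htb (by linarith) (by linarith) (by linarith) (by linarith)]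
  · linarith [gauss_sorted a c b s r t ha hac hbc hsa hra htc (by linarith) (by linarith) (by linarith) (by linarith)]
  · linarith [gauss_sorted c a b s t r hc hac hab hsc htc hra (by linarith) (by linarith) (by linarith) (by linarith)]
  · linarith [gauss_sorted b a c r t s hb hab hac hrb htb hsa (by linarith) (by linarith) (by linarith) (by linarith)]
  · linarith [gauss_sorted b c a t r s hb hbc hac htb hrb hsc (by linarith) (by linarith) (by linarith) (by linarith)]
  · linarith [gauss_sorted c b a t s r hc hbc hab htc hsc hrb (by linarith) (by linarith) (by linarith) (by linarith)]
  · linarith [gauss_sorted c b a t s r hc hbc hab htc hsc hrb (by linarith) (by linarith) (by linarith) (by linarith)]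

/-! ### The rhombic cubeoctahedron and the lattice `2D₃` -/

lemma volume_fin_three (S : Set (Fin 3 → ℝ)) (hS : MeasurableSet S) :
    volume S = ∫⁻ x : ℝ, ∫⁻ y : ℝ, volume {z : ℝ | ![x, y, z] ∈ S} := by
  have h3 := (volume_preserving_piFinSuccAbove (fun _ : Fin 3 => ℝ) 0).symm
  rw [← h3.measure_preimage_equiv S, Measure.volume_eq_prod,
    Measure.prod_apply ((MeasurableEquiv.measurable _) hS)]
  refine lintegral_congr fun x => ?_
  have h2 := (volume_preserving_piFinTwo (fun _ : Fin 2 => ℝ)).symm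
  have hm : Measurable (fun w : Fin 2 → ℝ =>
      (MeasurableEquiv.piFinSuccAbove (fun _ : Fin 3 => ℝ) 0).symm (x, w)) := by fun_prop
  have hS' : MeasurableSet (Prod.mk x ⁻¹'
      ((MeasurableEquiv.piFinSuccAbove (fun _ : Fin 3 => ℝ) 0).symm ⁻¹' S)) := hm hS
  rw [← h2.measure_preimage_equiv, Measure.volume_eq_prod,
    Measure.prod_apply ((MeasurableEquiv.measurable _) hS')]
  refine lintegral_congr fun y => ?_
  congr 1
  ext z
  have : (MeasurableEquiv.piFinSuccAbove (fun _ : Fin 3 => ℝ) 0).symm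
      (x, (MeasurableEquiv.piFinTwo (fun _ : Fin 2 => ℝ)).symm (y, z)) = ![x, y, z] := by
    ext i
    fin_cases i <;> rfl
  simp only [Set.mem_preimage, this]
  rfl

lemma sqrt_two_bounds : 1.414 < √2 ∧ √2 < 1.415 ∧ √2 ^ 2 = 2 := by
  refine ⟨Real.lt_sqrt_of_sq_lt (by norm_num), ?_, Real.sq_sqrt (by norm_num)⟩
  rw [Real.sqrt_lt' (by norm_num)]; norm_num

lemma isClosed_rco : IsClosed rhombiCubeocta := by
  unfold rhombiCubeocta
  simp only [Set.ofPred_and, Set.ofPred_forall]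
  refine IsClosed.inter ?_ (IsClosed.inter ?_ (IsClosed.inter ?_ (IsClosed.inter
    (isClosed_iInter fun i => ?_) ?_))) <;>
  exact isClosed_le (by fun_prop) (by fun_prop)

/-- The rhombic cubeoctahedron contains the open ball of radius `√2`. -/
lemma ball_subset (x : Fin 3 → ℝ) (h : x 0 ^ 2 + x 1 ^ 2 + x 2 ^ 2 < 2) : x ∈ rhombiCubeocta := by
  obtain ⟨h1, h2, h3⟩ := sqrt_two_bounds
  rw [← sq_abs (x 0), ← sq_abs (x 1), ← sq_abs (x 2)] at h
  have p0 := abs_nonneg (x 0)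
  have p1 := abs_nonneg (x 1)
  have p2 := abs_nonneg (x 2)
  refine ⟨?_, ?_, ?_, ?_, ?_⟩
  · nlinarith [sq_nonneg (|x 0| - |x 1|)]
  · nlinarith [sq_nonneg (|x 0| - |x 2|)]
  · nlinarith [sq_nonneg (|x 1| - |x 2|)]
  · intro i
    apply Real.le_sqrt_of_sq_le
    fin_cases i <;> simp only [Fin.zero_eta, Fin.mk_one, Fin.reduceFinMk] <;> nlinarith
  · nlinarith [sq_nonneg (|x 0| - |x 1|), sq_nonneg (|x 0| - |x 2|), sq_nonneg (|x 1| - |x 2|)]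

/-- Interior points of a translate satisfy the rhombic dodecahedron inequalities strictly: a
slight dilation from the centre `v` does not leave the translate. -/
lemma interior_strict (v p : Fin 3 → ℝ) (hp : p ∈ interior ((v + ·) '' rhombiCubeocta)) :
    |p 0 - v 0| + |p 1 - v 1| < 2 ∧ |p 0 - v 0| + |p 2 - v 2| < 2 ∧
      |p 1 - v 1| + |p 2 - v 2| < 2 := by
  have hc : Filter.Tendsto (fun ε : ℝ => v + ε • (p - v)) (nhdsWithin 1 (Set.Ioi 1)) (nhds p) := by
    have : Continuous (fun ε : ℝ => v + ε • (p - v)) := by fun_prop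
    simpa using (this.tendsto 1).mono_left nhdsWithin_le_nhds
  obtain ⟨ε, ⟨k, hk, hke⟩, hε⟩ := ((hc.eventually (mem_interior_iff_mem_nhds.1 hp)).and
    self_mem_nhdsWithin).exists
  have hε : 1 < ε := hε
  have hk' : k = ε • (p - v) := add_left_cancel hke
  obtain ⟨h1, h2, h3, -, -⟩ := hk
  simp only [hk', Pi.smul_apply, Pi.sub_apply, smul_eq_mul, abs_mul,
    abs_of_pos (zero_lt_one.trans hε), ← mul_add] at h1 h2 h3
  refine ⟨?_, ?_, ?_⟩ <;> nlinarith

lemma two_D3_mulVec (z : Fin 3 → ℤ) : ((2 : ℝ) • D3).mulVec (fun i => (z i : ℝ)) =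
    ![2 * (z 0 + z 1 : ℝ), 2 * (z 0 + z 2 : ℝ), 2 * (z 1 + z 2 : ℝ)] := by
  ext i
  fin_cases i <;> simp [D3, Matrix.mulVec, dotProduct, Fin.sum_univ_three] <;> ring

/-- Two overlapping translates would differ by `2d`, where `d` has integer coordinates with even sum
and `|dᵢ| + |dⱼ| ≤ 1` for all `i ≠ j`; this forces `d = 0`. -/
lemma packing_D3 : IsPackingLattice rhombiCubeocta (latticeOf ((2 : ℝ) • D3)) := by
  rintro x ⟨z, rfl⟩ y ⟨w, rfl⟩ hne
  rw [Set.disjoint_left]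
  intro p hx hy
  apply hne
  obtain ⟨x1, x2, x3⟩ := interior_strict _ p hx
  obtain ⟨y1, y2, y3⟩ := interior_strict _ p hy
  suffices z = w by rw [this]
  have key : ∀ (p q : ℝ) (m n m' n' : ℤ), |p - 2 * m| + |q - 2 * n| < 2 →
      |p - 2 * m'| + |q - 2 * n'| < 2 → |m - m'| + |n - n'| < 2 := by
    intro p q m n m' n' h1 h2
    have h3 : |(2 * (m - m') : ℝ)| ≤ |p - 2 * m| + |p - 2 * m'| := by
      rw [show (2 * (m - m') : ℝ) = (p - 2 * m') - (p - 2 * m) by ring]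
      linarith [abs_sub (p - 2 * m' : ℝ) (p - 2 * m)]
    have h4 : |(2 * (n - n') : ℝ)| ≤ |q - 2 * n| + |q - 2 * n'| := by
      rw [show (2 * (n - n') : ℝ) = (q - 2 * n') - (q - 2 * n) by ring]
      linarith [abs_sub (q - 2 * n' : ℝ) (q - 2 * n)]
    rw [abs_mul, abs_two] at h3 h4
    have : |(m - m' : ℝ)| + |(n - n' : ℝ)| < 2 := by linarith
    exact_mod_cast this
  simp only [two_D3_mulVec, Matrix.cons_val_zero, Matrix.cons_val_one, Matrix.cons_val,
    ← Int.cast_add] at x1 x2 x3 y1 y2 y3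
  have k1 := key _ _ _ _ _ _ x1 y1
  have k2 := key _ _ _ _ _ _ x2 y2
  have k3 := key _ _ _ _ _ _ x3 y3
  ext i
  fin_cases i <;> simp only [Fin.zero_eta, Fin.mk_one, Fin.reduceFinMk] <;> grind

/-! ### Volume of the rhombic cubeoctahedron -/

lemma lintegral_even (f : ℝ → ℝ) (hf : Continuous f) (a : ℝ) (ha : 0 ≤ a)
    (h0 : ∀ y, 0 ≤ y → y ≤ a → 0 ≤ f y) :
    ∫⁻ y in Set.Icc (-a) a, ENNReal.ofReal (f |y|) = ENNReal.ofReal (2 * ∫ y in (0)..a, f y) := by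
  have hc : Continuous fun y => f |y| := by fun_prop
  rw [← ofReal_integral_eq_lintegral_ofReal]
  · congr 1
    rw [integral_Icc_eq_integral_Ioc, ← intervalIntegral.integral_of_le (by linarith),
      ← intervalIntegral.integral_add_adjacent_intervals (b := 0)
        (hc.intervalIntegrable _ _) (hc.intervalIntegrable _ _)]
    have h1 : ∫ y in (0)..a, f |y| = ∫ y in (0)..a, f y := by
      refine intervalIntegral.integral_congr fun y hy => ?_
      rw [Set.uIcc_of_le ha] at hy
      simp only [abs_of_nonneg hy.1]
    have h2 : ∫ y in (-a)..0, f |y| = ∫ y in (0)..a, f |y| := by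
      have := intervalIntegral.integral_comp_neg (a := -a) (b := 0) fun y => f |y|
      simpa only [abs_neg, neg_zero, neg_neg] using this
    rw [h2, h1, two_mul]
  · exact hc.integrableOn_Icc
  · refine (ae_restrict_iff' measurableSet_Icc).2 (.of_forall fun y hy => ?_)
    exact h0 _ (abs_nonneg y) (abs_le.2 hy)

/-- The area of `{(y, z) : |y|, |z| ≤ a, |y| + |z| ≤ c}`, a square with four truncated corners. -/
lemma slice_area (a c : ℝ) (ha : 0 ≤ a) (h1 : a ≤ c) (h2 : c ≤ 2 * a) :
    ∫⁻ y in Set.Icc (-a) a, ENNReal.ofReal (2 * min a (c - |y|)) =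
      ENNReal.ofReal (4 * a ^ 2 - 2 * (2 * a - c) ^ 2) := by
  have hc : Continuous fun y => 2 * min a (c - y) := by fun_prop
  rw [lintegral_even (fun y => 2 * min a (c - y)) hc a ha]
  · congr 1
    rw [← intervalIntegral.integral_add_adjacent_intervals (b := c - a)
        (hc.intervalIntegrable _ _) (hc.intervalIntegrable _ _)]
    have e1 : ∫ y in (0)..(c - a), 2 * min a (c - y) = ∫ y in (0)..(c - a), 2 * a := by
      refine intervalIntegral.integral_congr fun y hy => ?_
      rw [Set.uIcc_of_le (by linarith)] at hy
      simp only [min_eq_left (show a ≤ c - y by linarith [hy.2])]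
    have e2 : ∫ y in (c - a)..a, 2 * min a (c - y) = ∫ y in (c - a)..a, 2 * (c - y) := by
      refine intervalIntegral.integral_congr fun y hy => ?_
      rw [Set.uIcc_of_le (by linarith)] at hy
      simp only [min_eq_right (show c - y ≤ a by linarith [hy.1])]
    rw [e1, e2, intervalIntegral.integral_const_mul (r := 2) (f := fun y => c - y),
      intervalIntegral.integral_sub
      (Continuous.intervalIntegrable (by fun_prop) _ _)
      (Continuous.intervalIntegrable (by fun_prop) _ _), integral_id]
    simp only [intervalIntegral.integral_const, smul_eq_mul]
    ring
  · intro y hy hya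
    have : 0 ≤ min a (c - y) := le_min ha (by linarith)
    linarith

/-- The slice of the rhombic cubeoctahedron at height `x₀` with `|x₀| = t ≤ √2` is the octagon
`|y|, |z| ≤ sliceWidth t`, `|y| + |z| ≤ sliceDiag t`; this is its half-width. -/
noncomputable def sliceWidth (t : ℝ) : ℝ := min √2 (2 - t)

/-- The bound on `|y| + |z|` in the octagonal slice with `|x₀| = t`. -/
noncomputable def sliceDiag (t : ℝ) : ℝ := min 2 (4 - √2 - t)

lemma slice_bounds (t : ℝ) (h0 : 0 ≤ t) (h : t ≤ √2) :
    0 ≤ sliceWidth t ∧ sliceWidth t ≤ sliceDiag t ∧ sliceDiag t ≤ 2 * sliceWidth t := by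
  obtain ⟨h1, h2, h3⟩ := sqrt_two_bounds
  unfold sliceWidth sliceDiag
  refine ⟨?_, ?_, ?_⟩ <;> grind

lemma volume_line (x y : ℝ) : volume {z : ℝ | ![x, y, z] ∈ rhombiCubeocta} =
    (Set.Icc (-√2) √2).indicator (fun x => (Set.Icc (-sliceWidth |x|) (sliceWidth |x|)).indicator
      (fun y => ENNReal.ofReal (2 * min (sliceWidth |x|) (sliceDiag |x| - |y|))) y) x := by
  obtain ⟨h1, h2, h3⟩ := sqrt_two_bounds
  have hmem : ∀ z, ![x, y, z] ∈ rhombiCubeocta ↔ |x| ≤ √2 ∧ |y| ≤ sliceWidth |x| ∧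
      |z| ≤ min (sliceWidth |x|) (sliceDiag |x| - |y|) := by
    intro z
    simp only [rhombiCubeocta, sliceWidth, sliceDiag, Set.mem_ofPred_eq, Fin.forall_fin_succ,
      Matrix.cons_val_zero, Matrix.cons_val_one, Matrix.cons_val, le_min_iff, le_sub_iff_add_le,
      Fin.succ_zero_eq_one, Fin.succ_one_eq_two, IsEmpty.forall_iff, and_true]
    constructor
    · rintro ⟨_, _, _, ⟨_, _, _⟩, _⟩
      refine ⟨?_, ⟨?_, ?_⟩, ⟨?_, ?_⟩, ?_, ?_⟩ <;> linarith
    · rintro ⟨_, ⟨_, _⟩, ⟨_, _⟩, _, _⟩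
      refine ⟨?_, ?_, ?_, ⟨?_, ?_, ?_⟩, ?_⟩ <;> linarith
  by_cases hx : |x| ≤ √2
  · rw [Set.indicator_of_mem (show x ∈ Set.Icc _ _ from abs_le.1 hx)]
    by_cases hy : |y| ≤ sliceWidth |x|
    · rw [Set.indicator_of_mem (show y ∈ Set.Icc _ _ from abs_le.1 hy)]
      have : {z : ℝ | ![x, y, z] ∈ rhombiCubeocta} =
          Set.Icc (-min (sliceWidth |x|) (sliceDiag |x| - |y|))
            (min (sliceWidth |x|) (sliceDiag |x| - |y|)) := by
        ext z
        simp only [Set.mem_ofPred_eq, hmem, hx, hy, true_and, abs_le, Set.mem_Icc]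
      rw [this, Real.volume_Icc]
      congr 1
      ring
    · rw [Set.indicator_of_notMem (show y ∉ Set.Icc _ _ from fun h => hy (abs_le.2 h))]
      simp [hmem, hy]
  · rw [Set.indicator_of_notMem (show x ∉ Set.Icc _ _ from fun h => hx (abs_le.2 h))]
    simp [hmem, hx]

lemma volume_rco : (volume rhombiCubeocta).toReal = (256 * √2 - 320) / 3 := by
  obtain ⟨h1, h2, h3⟩ := sqrt_two_bounds
  have hin : ∀ x : ℝ, ∫⁻ y : ℝ, volume {z : ℝ | ![x, y, z] ∈ rhombiCubeocta} =
      (Set.Icc (-√2) √2).indicator (fun x => ENNReal.ofReal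
        (4 * sliceWidth |x| ^ 2 - 2 * (2 * sliceWidth |x| - sliceDiag |x|) ^ 2)) x := by
    intro x
    simp only [volume_line]
    by_cases hx : x ∈ Set.Icc (-√2) √2
    · simp only [Set.indicator_of_mem hx]
      obtain ⟨b1, b2, b3⟩ := slice_bounds |x| (abs_nonneg x) (abs_le.2 hx)
      rw [lintegral_indicator measurableSet_Icc, slice_area _ _ b1 b2 b3]
    · simp only [Set.indicator_of_notMem hx, lintegral_zero]
  rw [volume_fin_three _ isClosed_rco.measurableSet]
  simp only [hin]
  have hc : Continuous fun t => 4 * sliceWidth t ^ 2 - 2 * (2 * sliceWidth t - sliceDiag t) ^ 2 := by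
    unfold sliceWidth sliceDiag
    fun_prop
  have hnn : ∀ t, 0 ≤ t → t ≤ √2 →
      0 ≤ 4 * sliceWidth t ^ 2 - 2 * (2 * sliceWidth t - sliceDiag t) ^ 2 := by
    intro t h0 ht
    obtain ⟨b1, b2, b3⟩ := slice_bounds t h0 ht
    nlinarith
  rw [lintegral_indicator measurableSet_Icc, lintegral_even
    (fun t => 4 * sliceWidth t ^ 2 - 2 * (2 * sliceWidth t - sliceDiag t) ^ 2) hc _ (by linarith) hnn,
    ENNReal.toReal_ofReal (mul_nonneg zero_le_two
      (intervalIntegral.integral_nonneg (by linarith) fun t ht => hnn t ht.1 ht.2)),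
    ← intervalIntegral.integral_add_adjacent_intervals (b := 2 - √2)
        (hc.intervalIntegrable _ _) (hc.intervalIntegrable _ _)]
  have e1 : ∫ t in (0)..(2 - √2), (4 * sliceWidth t ^ 2 - 2 * (2 * sliceWidth t - sliceDiag t) ^ 2)
      = ∫ t in (0)..(2 - √2), (4 * √2 ^ 2 - 2 * (2 * √2 - 2) ^ 2) := by
    refine intervalIntegral.integral_congr fun t ht => ?_
    rw [Set.uIcc_of_le (by linarith)] at ht
    have ha : sliceWidth t = √2 := min_eq_left (by linarith [ht.2])
    have hd : sliceDiag t = 2 := min_eq_left (by linarith [ht.2])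
    simp only [ha, hd]
  have e2 : ∫ t in (2 - √2)..√2, (4 * sliceWidth t ^ 2 - 2 * (2 * sliceWidth t - sliceDiag t) ^ 2)
      = ∫ t in (2 - √2)..√2, (2 * t ^ 2 + (4 * √2 - 16) * t + (16 - 2 * √2 ^ 2)) := by
    refine intervalIntegral.integral_congr fun t ht => ?_
    rw [Set.uIcc_of_le (by linarith)] at ht
    have ha : sliceWidth t = 2 - t := min_eq_right (by linarith [ht.1])
    have hd : sliceDiag t = 4 - √2 - t := min_eq_right (by linarith [ht.1])
    simp only [ha, hd]
    ring
  have e3 : ∫ t in (2 - √2)..√2, (2 * t ^ 2 + (4 * √2 - 16) * t + (16 - 2 * √2 ^ 2)) =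
      2 * ((√2 ^ 3 - (2 - √2) ^ 3) / 3) + (4 * √2 - 16) * ((√2 ^ 2 - (2 - √2) ^ 2) / 2)
        + (√2 - (2 - √2)) * (16 - 2 * √2 ^ 2) := by
    rw [intervalIntegral.integral_add (Continuous.intervalIntegrable (by fun_prop) _ _)
      (Continuous.intervalIntegrable (by fun_prop) _ _),
      intervalIntegral.integral_add (Continuous.intervalIntegrable (by fun_prop) _ _)
      (Continuous.intervalIntegrable (by fun_prop) _ _), intervalIntegral.integral_const_mul,
      intervalIntegral.integral_const_mul, integral_pow, integral_id,
      intervalIntegral.integral_const, smul_eq_mul]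
    norm_num
  rw [e1, e2, e3, intervalIntegral.integral_const, smul_eq_mul]
  have h4 : √2 ^ 3 = 2 * √2 := by rw [pow_succ, h3]
  ring_nf
  simp only [h3, h4]
  ring

/-! ### The determinant bound -/

/-- Nonzero vectors of a packing lattice have length at least `2√2`: otherwise the midpoint of `0` and
`v` lies in the interiors of two inscribed balls of radius `√2`. -/
lemma norm_sq_ge (B : Matrix (Fin 3) (Fin 3) ℝ)
    (hB : IsPackingLattice rhombiCubeocta (latticeOf B)) (v : Fin 3 → ℝ) (hv : v ∈ latticeOf B)
    (hv0 : v ≠ 0) : 8 ≤ v 0 ^ 2 + v 1 ^ 2 + v 2 ^ 2 := by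
  by_contra! hlt
  have h0 : (0 : Fin 3 → ℝ) ∈ latticeOf B := ⟨0, by ext i; simp [Matrix.mulVec, dotProduct]⟩
  have hball : ∀ u p : Fin 3 → ℝ, (p 0 - u 0) ^ 2 + (p 1 - u 1) ^ 2 + (p 2 - u 2) ^ 2 < 2 →
      p ∈ interior ((u + ·) '' rhombiCubeocta) := by
    intro u p hp
    rw [mem_interior]
    refine ⟨{q | (q 0 - u 0) ^ 2 + (q 1 - u 1) ^ 2 + (q 2 - u 2) ^ 2 < 2}, fun q hq => ?_,
      isOpen_lt (by fun_prop) (by fun_prop), hp⟩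
    exact ⟨q - u, ball_subset _ hq, by simp⟩
  refine Set.disjoint_left.1 (hB v hv 0 h0 hv0) (hball v ((1 / 2 : ℝ) • v) ?_)
    (hball 0 ((1 / 2 : ℝ) • v) ?_) <;>
  · simp only [Pi.smul_apply, smul_eq_mul, Pi.zero_apply]
    linarith

/-- The sum of the squared lengths of the columns, i.e. of the basis vectors of `Mℤ³`. -/
def basisEnergy (M : Matrix (Fin 3) (Fin 3) ℝ) : ℝ := ∑ i, ∑ j, M i j ^ 2

/-- Among the bases `BU` with `U ∈ SL₃(ℤ)` one has least energy, since only finitely many integer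
matrices `U` have energy below a given bound. -/
lemma exists_reduced (B : Matrix (Fin 3) (Fin 3) ℝ) (hB : IsUnit B.det) :
    ∃ U : Matrix (Fin 3) (Fin 3) ℤ, U.det = 1 ∧ ∀ V : Matrix (Fin 3) (Fin 3) ℤ, V.det = 1 →
      basisEnergy (B * U.map (↑)) ≤ basisEnergy (B * V.map (↑)) := by
  obtain ⟨E, hE⟩ : ∃ E, E = basisEnergy (B * (1 : Matrix (Fin 3) (Fin 3) ℤ).map (↑)) := ⟨_, rfl⟩
  let S : Set (Matrix (Fin 3) (Fin 3) ℤ) := {V | V.det = 1 ∧ basisEnergy (B * V.map (↑)) ≤ E}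
  have hS1 : 1 ∈ S := ⟨Matrix.det_one, hE.ge⟩
  have hfin : S.Finite := by
    obtain ⟨N, hN⟩ := exists_nat_ge (∑ i, ∑ k, |B⁻¹ i k| * (1 + E))
    have hsub : S ⊆ (Set.Icc (fun _ _ => -(N : ℤ)) (fun _ _ => (N : ℤ)) :
        Set (Fin 3 → Fin 3 → ℤ)) := by
      rintro V ⟨-, hV⟩
      have hent : ∀ k j, |(B * V.map (fun x : ℤ => (x : ℝ))) k j| ≤ 1 + E := by
        intro k j
        have h1 : (B * V.map (fun x : ℤ => (x : ℝ))) k j ^ 2 ≤ E := by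
          refine le_trans ?_ hV
          unfold basisEnergy
          refine le_trans ?_ (Finset.single_le_sum
            (fun i _ => Finset.sum_nonneg fun j _ => sq_nonneg _) (Finset.mem_univ k))
          exact Finset.single_le_sum
            (f := fun j => (B * V.map (fun x : ℤ => (x : ℝ))) k j ^ 2)
            (fun i _ => sq_nonneg _) (Finset.mem_univ j)
        rw [← sq_abs] at h1
        nlinarith [sq_nonneg (|(B * V.map (fun x : ℤ => (x : ℝ))) k j| - 1),
          abs_nonneg ((B * V.map (fun x : ℤ => (x : ℝ))) k j)]
      have hbd : ∀ i j, |V i j| ≤ (N : ℤ) := by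
        intro i j
        have hE0 : 0 ≤ 1 + E := (abs_nonneg _).trans (hent i j)
        have h2 : (V i j : ℝ) = (B⁻¹ * (B * V.map (fun x : ℤ => (x : ℝ)))) i j := by
          rw [← Matrix.mul_assoc, Matrix.nonsing_inv_mul _ hB, Matrix.one_mul, Matrix.map_apply]
        have h3 : |(V i j : ℝ)| ≤ N := by
          rw [h2, Matrix.mul_apply]
          calc _ ≤ ∑ k, |B⁻¹ i k * (B * V.map (fun x : ℤ => (x : ℝ))) k j| :=
                Finset.abs_sum_le_sum_abs _ _
            _ ≤ ∑ k, |B⁻¹ i k| * (1 + E) := by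
                refine Finset.sum_le_sum fun k _ => ?_
                rw [abs_mul]
                exact mul_le_mul_of_nonneg_left (hent k j) (abs_nonneg _)
            _ ≤ ∑ i, ∑ k, |B⁻¹ i k| * (1 + E) :=
                Finset.single_le_sum (f := fun i => ∑ k, |B⁻¹ i k| * (1 + E))
                  (fun i _ => Finset.sum_nonneg fun k _ => mul_nonneg (abs_nonneg _) hE0)
                  (Finset.mem_univ i)
            _ ≤ N := hN
        exact_mod_cast h3
      exact ⟨fun i j => (abs_le.1 (hbd i j)).1, fun i j => (abs_le.1 (hbd i j)).2⟩
    exact (Set.finite_Icc (α := Fin 3 → Fin 3 → ℤ) _ _).subset hsub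
  obtain ⟨U, hU, hmin⟩ := S.exists_min_image (fun V => basisEnergy (B * V.map (↑))) hfin ⟨1, hS1⟩
  refine ⟨U, hU.1, fun V hV => ?_⟩
  by_cases h : basisEnergy (B * V.map (↑)) ≤ E
  · exact hmin V ⟨hV, h⟩
  · exact hU.2.trans (not_le.1 h).le

/-- Every packing lattice has determinant at least `16`: an energy-minimal basis satisfies the
reduction inequalities of `gauss_form`, and its vectors have squared length at least `8`. -/
lemma det_ge (B : Matrix (Fin 3) (Fin 3) ℝ) (hB : IsUnit B.det)
    (hpack : IsPackingLattice rhombiCubeocta (latticeOf B)) : 16 ≤ |B.det| := by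
  obtain ⟨U, hU, hmin⟩ := exists_reduced B hB
  obtain ⟨M, hM⟩ : ∃ M, M = B * U.map (fun x : ℤ => (x : ℝ)) := ⟨_, rfl⟩
  have hdetM : M.det = B.det := by
    have : (U.map (fun x : ℤ => (x : ℝ))).det = ((U.det : ℤ) : ℝ) :=
      ((Int.castRingHom ℝ).map_det U).symm
    rw [hM, Matrix.det_mul, this, hU, Int.cast_one, mul_one]
  have hred : ∀ W : Matrix (Fin 3) (Fin 3) ℤ, W.det = 1 →
      basisEnergy M ≤ basisEnergy (M * W.map (fun x : ℤ => (x : ℝ))) := by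
    intro W hW
    have := hmin (U * W) (by rw [Matrix.det_mul, hU, hW, one_mul])
    have hc : (U * W).map (fun x : ℤ => (x : ℝ)) = U.map (fun x : ℤ => (x : ℝ)) *
      W.map (fun x : ℤ => (x : ℝ)) := Matrix.map_mul (f := Int.castRingHom ℝ)
    rw [hM, Matrix.mul_assoc, ← hc]
    exact this
  have hcol : ∀ j, 8 ≤ M 0 j ^ 2 + M 1 j ^ 2 + M 2 j ^ 2 := by
    intro j
    refine norm_sq_ge B hpack (M.col j) ⟨U.col j, ?_⟩ fun h0 => ?_
    · rw [hM]
      ext i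
      simp [Matrix.mul_apply, Matrix.mulVec, dotProduct]
    · have : M.det = 0 := Matrix.det_eq_zero_of_column_eq_zero j fun i => congrFun h0 i
      rw [← hdetM, this] at hB
      exact not_isUnit_zero hB
  -- Adding integer combinations of two basis vectors to the third does not lower the energy.
  have h1 := fun α β : ℤ => hred !![1, 0, 0; α, 1, 0; β, 0, 1] (by simp [Matrix.det_fin_three])
  have h2 := fun α β : ℤ => hred !![1, α, 0; 0, 1, 0; 0, β, 1] (by simp [Matrix.det_fin_three])
  have h3 := fun α β : ℤ => hred !![1, 0, α; 0, 1, β; 0, 0, 1] (by simp [Matrix.det_fin_three])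
  simp only [basisEnergy, Fin.sum_univ_three, Matrix.mul_apply, Matrix.map_apply, Matrix.of_apply,
    Matrix.cons_val', Matrix.cons_val_zero, Matrix.cons_val_one, Matrix.cons_val,
    Matrix.cons_val_fin_one] at h1 h2 h3
  -- The Gram matrix of the reduced basis has diagonal `a`, `b`, `c`.
  obtain ⟨a, ha⟩ : ∃ a, a = M 0 0 ^ 2 + M 1 0 ^ 2 + M 2 0 ^ 2 := ⟨_, rfl⟩
  obtain ⟨b, hb⟩ : ∃ b, b = M 0 1 ^ 2 + M 1 1 ^ 2 + M 2 1 ^ 2 := ⟨_, rfl⟩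
  obtain ⟨c, hc⟩ : ∃ c, c = M 0 2 ^ 2 + M 1 2 ^ 2 + M 2 2 ^ 2 := ⟨_, rfl⟩
  obtain ⟨r, hr⟩ : ∃ r, r = M 0 0 * M 0 1 + M 1 0 * M 1 1 + M 2 0 * M 2 1 := ⟨_, rfl⟩
  obtain ⟨s, hs⟩ : ∃ s, s = M 0 0 * M 0 2 + M 1 0 * M 1 2 + M 2 0 * M 2 2 := ⟨_, rfl⟩
  obtain ⟨t, ht⟩ : ∃ t, t = M 0 1 * M 0 2 + M 1 1 * M 1 2 + M 2 1 * M 2 2 := ⟨_, rfl⟩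
  have q1 : ∀ α β : ℤ, 0 ≤ α ^ 2 * b + β ^ 2 * c + 2 * α * r + 2 * β * s + 2 * α * β * t := by
    intro α β
    have := h1 α β
    rw [hb, hc, hr, hs, ht]
    push_cast at this
    linarith
  have q2 : ∀ α β : ℤ, 0 ≤ α ^ 2 * a + β ^ 2 * c + 2 * α * r + 2 * β * t + 2 * α * β * s := by
    intro α β
    have := h2 α β
    rw [ha, hc, hr, hs, ht]
    push_cast at this
    linarith
  have q3 : ∀ α β : ℤ, 0 ≤ α ^ 2 * a + β ^ 2 * b + 2 * α * s + 2 * β * t + 2 * α * β * r := by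
    intro α β
    have := h3 α β
    rw [ha, hb, hr, hs, ht]
    push_cast at this
    linarith
  have hD : M.det ^ 2 = a * b * c + 2 * r * s * t - a * t ^ 2 - b * s ^ 2 - c * r ^ 2 := by
    rw [ha, hb, hc, hr, hs, ht, Matrix.det_fin_three]
    ring
  have ha8 : 8 ≤ a := ha ▸ hcol 0
  have hb8 : 8 ≤ b := hb ▸ hcol 1
  have hc8 : 8 ≤ c := hc ▸ hcol 2
  clear h1 h2 h3 hr hs ht ha hb hc hcol
  have habs : ∀ x y : ℝ, 0 ≤ x + 2 * y → 0 ≤ x - 2 * y → 2 * |y| ≤ x := by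
    intro x y h1 h2
    rcases abs_cases y with h | h <;> linarith
  have key := gauss_form a b c r s t (by linarith) (by linarith) (by linarith)
    (habs _ _ (by have := q2 1 0; norm_num at this; linarith)
      (by have := q2 (-1) 0; norm_num at this; linarith))
    (habs _ _ (by have := q1 1 0; norm_num at this; linarith)
      (by have := q1 (-1) 0; norm_num at this; linarith))
    (habs _ _ (by have := q3 1 0; norm_num at this; linarith)
      (by have := q3 (-1) 0; norm_num at this; linarith))
    (habs _ _ (by have := q1 0 1; norm_num at this; linarith)
      (by have := q1 0 (-1); norm_num at this; linarith))
    (habs _ _ (by have := q3 0 1; norm_num at this; linarith)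
      (by have := q3 0 (-1); norm_num at this; linarith))
    (habs _ _ (by have := q2 0 1; norm_num at this; linarith)
      (by have := q2 0 (-1); norm_num at this; linarith))
    (by
      have p1 := q1 1 1
      have p2 := q1 1 (-1)
      have p3 := q1 (-1) 1
      have p4 := q1 (-1) (-1)
      have p5 := q2 1 1
      have p6 := q2 1 (-1)
      have p7 := q2 (-1) 1
      have p8 := q2 (-1) (-1)
      have p9 := q3 1 1
      have p10 := q3 1 (-1)
      have p11 := q3 (-1) 1
      have p12 := q3 (-1) (-1)
      norm_num at p1 p2 p3 p4 p5 p6 p7 p8 p9 p10 p11 p12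
      rintro x (rfl | rfl | rfl) <;> refine ⟨?_, ?_, ?_, ?_⟩ <;> linarith)
  rw [← hD, hdetM, ← sq_abs] at key
  have hab : 64 ≤ a * b := by nlinarith
  have habc : 512 ≤ a * b * c := by nlinarith
  nlinarith [abs_nonneg B.det]

/-- The lattice packing density of the rhombic cubeoctahedron is `(16√2 − 20)/3`,
attained by the packing lattice `2D₃`. -/
theorem stmt_17 :
    packDensity rhombiCubeocta = (16 * Real.sqrt 2 - 20) / 3 ∧
    IsUnit ((2 : ℝ) • D3).det ∧
    IsPackingLattice rhombiCubeocta (latticeOf ((2 : ℝ) • D3)) ∧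
    (volume rhombiCubeocta).toReal / |((2 : ℝ) • D3).det| =
      (16 * Real.sqrt 2 - 20) / 3 := by
  have hdet : |((2 : ℝ) • D3).det| = 16 := by
    rw [Matrix.det_smul, Matrix.det_fin_three]
    simp [D3]
    norm_num
  have hunit : IsUnit ((2 : ℝ) • D3).det :=
    isUnit_iff_ne_zero.2 (abs_ne_zero.1 (by rw [hdet]; norm_num))
  have hval : (volume rhombiCubeocta).toReal / |((2 : ℝ) • D3).det| = (16 * √2 - 20) / 3 := by
    rw [hdet, volume_rco]
    ring
  refine ⟨IsGreatest.csSup_eq ⟨⟨_, hunit, packing_D3, hval.symm⟩, ?_⟩, hunit, packing_D3, hval⟩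
  rintro _ ⟨B, hB, hpack, rfl⟩
  rw [← hval, hdet]
  exact div_le_div_of_nonneg_left ENNReal.toReal_nonneg (by norm_num) (det_ge B hB hpack)
end
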